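/- arXiv:1912.06897 — 2 statements merged into one kernel-verified Lean document; each statement's English description precedes it below -/
import Mathlib

section
/- There is a computable function F from (encoded) invertible Mealy automata to Booleans such that for every bounded invertible Mealy automaton A, F(A) = true if and only if the automaton group G_A is finite. In other words, the finiteness problem for groups generated by bounded automata is decidable. -/
/-- A Mealy automaton over alphabet `X` with state set `S`:
the transition-output function sends `(s, x)` to `(output letter, next state)`. -/
structure Mealy (S X : Type*) where
  step : S → X → X × S

namespace Mealy

variable {S X : Type*}

/-- The section `s|_v`: the state reached after processing the word `v` from state `s`. -/
def sec (A : Mealy S X) (s : S) : List X → S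
  | [] => s
  | x :: v => A.sec (A.step s x).2 v

/-- The action of a state on finite words (lists of letters, read left to right). -/
def act (A : Mealy S X) (s : S) : List X → List X
  | [] => []
  | x :: v => (A.step s x).1 :: A.act (A.step s x).2 v

/-- A state is trivial if it acts on `X^*` as the identity. -/
def IsTrivialState (A : Mealy S X) (s : S) : Prop := ∀ v : List X, A.act s v = v

/-- An automaton is invertible if every state acts on the letters by a permutation. -/
def Invertible (A : Mealy S X) : Prop :=
  ∀ s : S, Function.Bijective fun x : X => (A.step s x).1

/-- The automaton group `G_A`: the subgroup of permutations of `X^*` generated by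
the permutations defined by the states of `A`. -/
def autGroup (A : Mealy S X) : Subgroup (Equiv.Perm (List X)) :=
  Subgroup.closure { f : Equiv.Perm (List X) | ∃ s : S, ∀ v : List X, f v = A.act s v }

/-- A left-infinite sequence `…x₂x₁` is encoded as `p : ℕ → X` with `p 0 = x₁`, `p 1 = x₂`, ….
It is post-critical if it is the sequence of input labels or of output labels of a
left-infinite directed path in `A` ending at a non-trivial state. -/
def IsPostCritical (A : Mealy S X) (p : ℕ → X) : Prop :=
  ∃ (σ : ℕ → S) (inp out : ℕ → X),
    (∀ n, A.step (σ (n + 1)) (inp n) = (out n, σ n)) ∧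
      ¬A.IsTrivialState (σ 0) ∧ (p = inp ∨ p = out)

/-- The post-critical set of `A`. -/
def PostCriticalSet (A : Mealy S X) : Set (ℕ → X) := { p | A.IsPostCritical p }

/-- An automaton is bounded if its post-critical set is finite. -/
def Bounded (A : Mealy S X) : Prop := A.PostCriticalSet.Finite

/-- The length-`n` suffix (as a finite word, read left to right) of a left-infinite
sequence `…x₂x₁` encoded as `p : ℕ → X`: the word `xₙ…x₂x₁`. -/
def lsuffix (p : ℕ → X) (n : ℕ) : List X := (List.range n).reverse.map p

/-- A finite word is post-critical if it is a suffix of some post-critical sequence. -/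
def IsPostCriticalWord (A : Mealy S X) (v : List X) : Prop :=
  ∃ p : ℕ → X, A.IsPostCritical p ∧ v = lsuffix p v.length

/-- The base relation for `e`-equivalence: `v ≈ u` if some state `s` satisfies
`s|_v` trivial and `s(v) = u`, or `s|_u` trivial and `s(u) = v`. -/
def ERel (A : Mealy S X) (v u : List X) : Prop :=
  ∃ s : S, (A.IsTrivialState (A.sec s v) ∧ A.act s v = u) ∨
    (A.IsTrivialState (A.sec s u) ∧ A.act s u = v)

/-- `e`-equivalence: the equivalence relation generated by `≈`. -/
def EEquiv (A : Mealy S X) : List X → List X → Prop := Relation.EqvGen A.ERel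

/-- The `e`-orbit of a word. -/
def eOrbit (A : Mealy S X) (v : List X) : Set (List X) := { u | A.EEquiv v u }

/-- The orbit of a finite word under the automaton group. -/
def orbit (A : Mealy S X) (v : List X) : Set (List X) := { u | ∃ g ∈ A.autGroup, g v = u }

/-- Reachability by a directed path in the automaton. -/
def Reaches (A : Mealy S X) : S → S → Prop :=
  Relation.ReflTransGen fun a b => ∃ x : X, (A.step a x).2 = b

/-- The states of the circuit part `C(A)`: states reachable by a directed path
from some directed cycle of `A`. -/
def circuitStates (A : Mealy S X) : Set S :=
  { s | ∃ t : S, (∃ x : X, A.Reaches (A.step t x).2 t) ∧ A.Reaches t s }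

/-- The circuit part `C(A)` as a subautomaton. -/
def circuitPart (A : Mealy S X) : Mealy A.circuitStates X where
  step s x :=
    ((A.step s.1 x).1,
      ⟨(A.step s.1 x).2, by
        obtain ⟨t, hc, hr⟩ := s.2
        exact ⟨t, hc, hr.tail ⟨x, rfl⟩⟩⟩)

/-- The subautomaton induced on a subset of states closed under transitions. -/
def subautomaton (A : Mealy S X) (T : Set S)
    (hT : ∀ s ∈ T, ∀ x : X, (A.step s x).2 ∈ T) : Mealy T X where
  step s x := ((A.step s.1 x).1, ⟨(A.step s.1 x).2, hT s.1 s.2 x⟩)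

/-- The extension of a length- and prefix-preserving map on finite words to
right-infinite sequences (letter by letter). -/
def extOmega (f : List X → List X) (w : ℕ → X) : ℕ → X :=
  fun n => (f ((List.range (n + 1)).map w)).getD n (w n)

/-- The orbit of a right-infinite sequence under the automaton group. -/
def orbitOmega (A : Mealy S X) (w : ℕ → X) : Set (ℕ → X) :=
  { w' | ∃ g ∈ A.autGroup, w' = extOmega (⇑(g : Equiv.Perm (List X))) w }

/-- The group `G_A` is level-transitive if it acts transitively on each level `X^n`. -/
def LevelTransitive (A : Mealy S X) : Prop :=
  ∀ v u : List X, v.length = u.length → ∃ g ∈ A.autGroup, g v = u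

end Mealy

/-- The run of a deterministic finite-state machine on a right-infinite input:
`dfaRun δ q₀ w n` is the state after reading the first `n` letters. -/
def dfaRun {Q X : Type*} (δ : Q → X → Q) (q₀ : Q) (w : ℕ → X) : ℕ → Q
  | 0 => q₀
  | n + 1 => δ (dfaRun δ q₀ w n) (w n)

/-- A concrete encoding of an invertible Mealy automaton (with state set `Fin n`
over alphabet `Fin k`) as a natural number. -/
def encodeAut (n k : ℕ) (step : Fin n → Fin k → Fin k × Fin n) : ℕ :=
  Nat.pair n (Nat.pair k (Encodable.encode
    ((List.finRange n).flatMap fun s =>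
      (List.finRange k).map fun x =>
        Nat.pair ((step s x).1 : ℕ) ((step s x).2 : ℕ))))


namespace Mealy

section Part1

variable {S X : Type} (A : Mealy S X)

theorem sec_append (s : S) (v w : List X) : A.sec s (v ++ w) = A.sec (A.sec s v) w := by
  induction v generalizing s with
  | nil => rfl
  | cons x v ih => simp [sec, ih]

theorem act_append (s : S) (v w : List X) :
    A.act s (v ++ w) = A.act s v ++ A.act (A.sec s v) w := by
  induction v generalizing s with
  | nil => rfl
  | cons x v ih => simp [sec, act, ih]

theorem act_length (s : S) (v : List X) : (A.act s v).length = v.length := by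
  induction v generalizing s with
  | nil => rfl
  | cons x v ih => simp [act, ih]

theorem triv_sec {s : S} (h : A.IsTrivialState s) (v : List X) :
    A.IsTrivialState (A.sec s v) := by
  intro w
  have h1 := h (v ++ w)
  rw [act_append, h v] at h1
  exact List.append_cancel_left h1

/-- Covering bound for cardinalities. -/
theorem ncard_cover {ι α : Type} {t : Set ι} (ht : t.Finite) {c K : ℕ} (hc : t.ncard ≤ c)
    (f : ι → Set α) (hf : ∀ i ∈ t, (f i).Finite) (hK : ∀ i ∈ t, (f i).ncard ≤ K)
    {W : Set α} (hW : ∀ w ∈ W, ∃ i ∈ t, w ∈ f i) : W.ncard ≤ c * K := by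
  classical
  have hsub : W ⊆ ⋃ i ∈ ht.toFinset, f i := by
    intro w hw
    obtain ⟨i, hi, hwi⟩ := hW w hw
    simp only [Set.Finite.mem_toFinset, Set.mem_iUnion]
    exact ⟨i, hi, hwi⟩
  have hfin : (⋃ i ∈ ht.toFinset, f i).Finite :=
    Set.Finite.biUnion (Finset.finite_toSet _) (fun i hi => hf i (by simpa using hi))
  refine (Set.ncard_le_ncard hsub hfin).trans ((Finset.set_ncard_biUnion_le _ _).trans ?_)
  refine (Finset.sum_le_card_nsmul _ _ K (fun i hi => hK i (by simpa using hi))).trans ?_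
  rw [smul_eq_mul, ← Set.ncard_eq_toFinset_card t ht]
  exact Nat.mul_le_mul_right _ hc

theorem ncard_words [Fintype X] (m : ℕ) :
    {v : List X | v.length = m}.ncard ≤ Fintype.card X ^ m := by
  induction m with
  | zero =>
    have : {v : List X | v.length = 0} ⊆ {[]} := by
      intro v hv
      simpa using hv
    exact (Set.ncard_le_ncard this).trans (by simp)
  | succ m ih =>
    rw [pow_succ']
    refine ncard_cover (t := (Set.univ : Set X)) Set.finite_univ (by simp [Set.ncard_univ])
      (fun x => (fun w => x :: w) '' {v : List X | v.length = m}) ?_ ?_ ?_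
    · intro i _
      exact (List.finite_length_eq X m).image _
    · intro i _
      exact (Set.ncard_image_le (List.finite_length_eq X m)).trans ih
    · rintro (_ | ⟨x, w⟩) hw
      · simp at hw
      · exact ⟨x, trivial, w, by simpa using hw, rfl⟩

/-- `s` has a nontrivial section at some word of length `r`. -/
def Live (r : ℕ) (s : S) : Prop := ∃ w : List X, w.length = r ∧ ¬ A.IsTrivialState (A.sec s w)

variable {A}

theorem Live.of_append {r : ℕ} {s : S} {v : List X} (h : A.Live r (A.sec s v)) :
    A.Live r s := by
  obtain ⟨w, hw, hn⟩ := h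
  refine ⟨(v ++ w).take r, ?_, fun ht => hn ?_⟩
  · simp [hw]
  · have := A.triv_sec ht ((v ++ w).drop r)
    rwa [← sec_append, List.take_append_drop, sec_append] at this

variable (A)

open Classical in
/-- number of branchings along `v` -/
noncomputable def br (A : Mealy S X) (n : ℕ) (s : S) : List X → ℕ
  | [] => 0
  | x :: v => A.br n (A.step s x).2 v + (if ∃ y, y ≠ x ∧ A.Live n (A.step s y).2 then 1 else 0)

theorem count_br [Fintype X] (hk : 1 ≤ Fintype.card X) (n m : ℕ) : ∀ (b : ℕ) (s : S),
    (∀ v : List X, v.length = m → A.Live n (A.sec s v) → A.br n s v ≤ b) →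
    {v : List X | v.length = m ∧ A.Live n (A.sec s v)}.ncard ≤ Fintype.card X ^ b := by
  induction m with
  | zero =>
    intro b s _
    have : {v : List X | v.length = 0 ∧ A.Live n (A.sec s v)} ⊆ {[]} := by
      intro v hv
      simpa using hv.1
    refine (Set.ncard_le_ncard this).trans ?_
    simpa using Nat.one_le_pow _ _ hk
  | succ m ih =>
    intro b s h
    have hfin : ∀ s : S, {v : List X | v.length = m ∧ A.Live n (A.sec s v)}.Finite := fun s =>
      (List.finite_length_eq X m).subset (fun v hv => hv.1)
    by_cases hb : ∃ x y, x ≠ y ∧ A.Live n (A.step s x).2 ∧ A.Live n (A.step s y).2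
    · obtain ⟨x, y, hxy, hx, hy⟩ := hb
      have hbr : ∀ z, ∃ y, y ≠ z ∧ A.Live n (A.step s y).2 := by
        intro z
        by_cases hz : x = z
        · exact ⟨y, fun e => hxy (hz.trans e.symm), hy⟩
        · exact ⟨x, hz, hx⟩
      cases b with
      | zero =>
        have : {v : List X | v.length = m + 1 ∧ A.Live n (A.sec s v)} = ∅ := by
          rw [Set.eq_empty_iff_forall_notMem]
          rintro (_ | ⟨z, v⟩) ⟨hv, hl⟩
          · simp at hv
          · have := h _ hv hl
            simp only [br, if_pos (hbr z)] at this
            omega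
        rw [this]; simp
      | succ b =>
        rw [pow_succ']
        refine ncard_cover (t := (Set.univ : Set X)) Set.finite_univ (by simp [Set.ncard_univ])
          (fun x => (fun w => x :: w) '' {v : List X | v.length = m ∧
            A.Live n (A.sec (A.step s x).2 v)}) ?_ ?_ ?_
        · intro i _
          exact (hfin _).image _
        · intro z _
          refine (Set.ncard_image_le (hfin _)).trans (ih b _ ?_)
          intro v hv hl
          have := h (z :: v) (by simp [hv]) hl
          simp only [br, if_pos (hbr z)] at this
          omega
        · rintro (_ | ⟨z, w⟩) hw
          · simp at hw
          · exact ⟨z, trivial, w, ⟨by simpa using hw.1, hw.2⟩, rfl⟩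
    · by_cases hx : ∃ x, A.Live n (A.step s x).2
      · obtain ⟨x, hx⟩ := hx
        have hsub : {v : List X | v.length = m + 1 ∧ A.Live n (A.sec s v)} ⊆
            (fun w => x :: w) '' {v : List X | v.length = m ∧
              A.Live n (A.sec (A.step s x).2 v)} := by
          rintro (_ | ⟨z, w⟩) hw
          · simp at hw
          · have hz : A.Live n (A.step s z).2 := Live.of_append (v := w) hw.2
            have : x = z := by
              by_contra hne
              exact hb ⟨x, z, hne, hx, hz⟩
            subst this
            exact ⟨w, ⟨by simpa using hw.1, hw.2⟩, rfl⟩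
        refine (Set.ncard_le_ncard hsub ((hfin _).image _)).trans
          ((Set.ncard_image_le (hfin _)).trans (ih b _ ?_))
        intro v hv hl
        have := h (x :: v) (by simp [hv]) hl
        simp only [br] at this
        omega
      · have : {v : List X | v.length = m + 1 ∧ A.Live n (A.sec s v)} = ∅ := by
          rw [Set.eq_empty_iff_forall_notMem]
          rintro (_ | ⟨z, v⟩) ⟨hv, hl⟩
          · simp at hv
          · exact hx ⟨z, Live.of_append (v := v) hl⟩
        rw [this]; simp

/-- No closed path with a live exit. -/
def NoExit (n : ℕ) : Prop := ∀ (q : S) (x y : X) (u : List X),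
  A.sec q (x :: u) = q → y ≠ x → ¬ A.Live n (A.step q y).2

theorem br_le [Fintype S] {n : ℕ} (hno : A.NoExit n) (v : List X) :
    ∀ s : S, A.br n s v ≤ (Set.range (fun w => A.sec s w)).ncard := by
  induction v with
  | nil => intro s; simp [br]
  | cons x v ih =>
    intro s
    have hsub : Set.range (fun w => A.sec (A.step s x).2 w) ⊆ Set.range (fun w => A.sec s w) := by
      rintro _ ⟨w, rfl⟩
      exact ⟨x :: w, rfl⟩
    have h1 := ih (A.step s x).2
    by_cases hb : ∃ y, y ≠ x ∧ A.Live n (A.step s y).2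
    · simp only [br, if_pos hb]
      obtain ⟨y, hy, hl⟩ := hb
      have : Set.range (fun w => A.sec (A.step s x).2 w) ⊂ Set.range (fun w => A.sec s w) := by
        refine ⟨hsub, fun hc => ?_⟩
        obtain ⟨w, hw⟩ := hc ⟨[], rfl⟩
        exact hno s x y w hw hy hl
      have := Set.ncard_lt_ncard this (Set.toFinite _)
      omega
    · simp only [br, if_neg hb]
      have := Set.ncard_le_ncard hsub (Set.toFinite _)
      omega

/-- A long nontrivial path gives a nontrivial cycle. -/
theorem exists_cycle [Fintype S] {s : S} (h : A.Live (Fintype.card S) s) :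
    ∃ z w : List X, w ≠ [] ∧ A.sec (A.sec s z) w = A.sec s z ∧
      ¬ A.IsTrivialState (A.sec s z) := by
  by_contra hcon
  have key : ∀ (w : List X) (t : S), (∃ z, A.sec s z = t) → ¬ A.IsTrivialState (A.sec t w) →
      w.length + 1 ≤ (Set.range (fun w => A.sec t w)).ncard := by
    intro w
    induction w with
    | nil =>
      intro t _ _
      have : (Set.range (fun w => A.sec t w)).Nonempty := ⟨t, [], rfl⟩
      have := (Set.ncard_pos (Set.toFinite _)).2 this
      simp only [List.length_nil]
      omega
    | cons x w ih =>
      rintro t ⟨z, rfl⟩ hn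
      have h1 := ih (A.step (A.sec s z) x).2 ⟨z ++ [x], by rw [sec_append]; rfl⟩ hn
      have : Set.range (fun w => A.sec (A.step (A.sec s z) x).2 w) ⊂
          Set.range (fun w => A.sec (A.sec s z) w) := by
        refine ⟨?_, fun hc => ?_⟩
        · rintro _ ⟨w, rfl⟩
          exact ⟨x :: w, rfl⟩
        · obtain ⟨w', hw⟩ := hc ⟨[], rfl⟩
          exact hcon ⟨z, x :: w', by simp, hw, fun ht => hn (A.triv_sec ht _)⟩
      have := Set.ncard_lt_ncard this (Set.toFinite _)
      simp only [List.length_cons]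
      omega
  obtain ⟨w, hw, hn⟩ := h
  have h1 := key w s ⟨[], rfl⟩ hn
  have h2 := Set.ncard_le_card (Set.range (fun w => A.sec s w))
  rw [Nat.card_eq_fintype_card] at h2
  omega

/-- `f` is the input label sequence of a left-infinite path ending in `q`. -/
def PC (q : S) (f : ℕ → X) : Prop :=
  ∃ σ : ℕ → S, σ 0 = q ∧ ∀ i, (A.step (σ (i + 1)) (f i)).2 = σ i

theorem PC.post {q : S} {f : ℕ → X} (h : A.PC q f) (hq : ¬ A.IsTrivialState q) :
    f ∈ A.PostCriticalSet := by
  obtain ⟨σ, h0, h1⟩ := h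
  exact ⟨σ, f, fun i => (A.step (σ (i + 1)) (f i)).1, fun i => Prod.ext rfl (h1 i),
    by rwa [h0], Or.inl rfl⟩

theorem PC.append {q : S} {f : ℕ → X} (h : A.PC q f) (w : List X) :
    ∃ g : ℕ → X, A.PC (A.sec q w) g ∧ (∀ i, g (i + w.length) = f i) ∧
      ∀ x u, w = x :: u → g u.length = x := by
  induction w generalizing q f with
  | nil => exact ⟨f, h, fun i => rfl, by simp⟩
  | cons x w ih =>
    obtain ⟨σ, h0, h1⟩ := h
    have : A.PC (A.step q x).2 (fun i => Nat.casesOn i x f) := by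
      refine ⟨fun i => Nat.casesOn i (A.step q x).2 σ, rfl, ?_⟩
      rintro (_ | i)
      · simp [h0]
      · exact h1 i
    obtain ⟨g, hg, hs, -⟩ := ih this
    refine ⟨g, hg, fun i => ?_, ?_⟩
    · have := hs (i + 1)
      rw [List.length_cons, show i + (w.length + 1) = i + 1 + w.length by ring, this]
    · rintro x' u hxu
      obtain ⟨rfl, rfl⟩ := List.cons.inj hxu
      simpa using hs 0

theorem PC.cycle {q : S} {x : X} {u : List X} (h : A.sec q (x :: u) = q) :
    ∃ f : ℕ → X, A.PC q f ∧ (∀ i, f (i + (u.length + 1)) = f i) ∧ f u.length = x := by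
  set U := x :: u with hU
  have hl : U.length = u.length + 1 := by simp [hU]
  refine ⟨fun i => U.getD (u.length - i % (u.length + 1)) x,
    ⟨fun i => A.sec q (U.take (U.length - i % (u.length + 1))), by simp [h], ?_⟩, ?_, ?_⟩
  · intro i
    have hlt : i % (u.length + 1) < u.length + 1 := Nat.mod_lt _ (by omega)
    have hget : ∀ j (hj : j < U.length), (A.step (A.sec q (U.take j)) (U.getD j x)).2
        = A.sec q (U.take (j + 1)) := by
      intro j hj
      rw [List.take_add_one, sec_append, List.getD_eq_getElem?_getD]
      simp [List.getElem?_eq_getElem hj, sec]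
    by_cases hc : i % (u.length + 1) = u.length
    · have h2 : (i + 1) % (u.length + 1) = 0 := by
        rw [Nat.add_mod, hc]
        rcases Nat.eq_zero_or_pos u.length with h0 | h0
        · simp [h0]
        · rw [Nat.mod_eq_of_lt (a := 1) (by omega), Nat.mod_self]
      have := hget 0 (by omega)
      simp only [hc, h2, hl]
      simp only [Nat.sub_self, Nat.sub_zero]
      rw [← hl, List.take_length, h]
      have e : U.length - u.length = 1 := by omega
      rw [e]
      simpa [sec] using this
    · have h2 : (i + 1) % (u.length + 1) = i % (u.length + 1) + 1 := by
        rw [Nat.add_mod, Nat.mod_eq_of_lt (a := 1) (by omega), Nat.mod_eq_of_lt (by omega)]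
      have := hget (u.length - i % (u.length + 1)) (by omega)
      simp only [h2, hl]
      rw [show u.length + 1 - (i % (u.length + 1) + 1) = u.length - i % (u.length + 1) by omega,
        show u.length + 1 - i % (u.length + 1) = u.length - i % (u.length + 1) + 1 by omega]
      exact this
  · intro i
    simp
  · simp [hU]

theorem noExit [Fintype S] (hB : A.Bounded) : A.NoExit (Fintype.card S) := by
  intro q x y u hq hyx hlive
  obtain ⟨z, w, hw, hcyc, hnt⟩ := A.exists_cycle hlive
  obtain ⟨f, hf, hper, hfx⟩ := PC.cycle A hq
  obtain ⟨g, hg, hgs, hgy⟩ := PC.append A hf (y :: z)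
  have hgy' := hgy y z rfl
  set r := A.sec (A.step q y).2 z with hr
  have hwl : 0 < w.length := List.length_pos_of_ne_nil hw
  -- the family
  have fam : ∀ j : ℕ, ∃ p : ℕ → X, A.PC r p ∧ ∀ i, p (i + j * w.length) = g i := by
    intro j
    induction j with
    | zero => exact ⟨g, hg, by simp⟩
    | succ j ih =>
      obtain ⟨p, hp, hps⟩ := ih
      obtain ⟨p', hp', hps', -⟩ := PC.append A hp w
      rw [hcyc] at hp'
      refine ⟨p', hp', fun i => ?_⟩
      rw [← hps i, ← hps' (i + j * w.length)]
      congr 1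
      ring
  choose p hp hps using fam
  have hinj : Function.Injective p := by
    have aux : ∀ a b, a < b → p a ≠ p b := by
      intro a b hab he
      obtain ⟨d, rfl⟩ := Nat.exists_eq_add_of_lt hab
      set D := (d + 1) * w.length with hD
      have hDpos : 0 < D := by positivity
      have hgper : ∀ i, g (i + D) = g i := by
        intro i
        rw [← hps a (i + D), he, ← hps (a + d + 1) i]
        congr 1
        rw [hD]; ring
      have hgper' : ∀ c i, g (i + c * D) = g i := by
        intro c
        induction c with
        | zero => simp
        | succ c ih => intro i; rw [← hgper i, ← ih (i + D)]; congr 1; ring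
      have hfper' : ∀ c i, f (i + c * (u.length + 1)) = f i := by
        intro c
        induction c with
        | zero => simp
        | succ c ih => intro i; rw [← hper i, ← ih (i + (u.length + 1))]; congr 1; ring
      have e1 := hgper' (u.length + 1) z.length
      obtain ⟨D', hD'⟩ := Nat.exists_eq_succ_of_ne_zero hDpos.ne'
      have e2 : z.length + (u.length + 1) * D
          = (u.length + D' * (u.length + 1)) + (y :: z).length := by
        rw [hD']; simp; ring
      rw [e2, hgs, hfper', hfx, hgy'] at e1
      exact hyx e1.symm
    intro a b he
    rcases lt_trichotomy a b with h | h | h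
    · exact absurd he (aux a b h)
    · exact h
    · exact absurd he.symm (aux b a h)
  have : (Set.range p).Infinite := Set.infinite_range_of_injective hinj
  refine this (hB.subset ?_)
  rintro _ ⟨j, rfl⟩
  exact PC.post A (hp j) hnt

/-- The set of nontrivial edges at level `m`. -/
def E (m : ℕ) : Set (List X × S) := {e | e.1.length = m ∧ ¬ A.IsTrivialState (A.sec e.2 e.1)}

theorem E_finite [Fintype S] [Fintype X] (m : ℕ) : (A.E m).Finite :=
  ((List.finite_length_eq X m).prod (Set.finite_univ (α := S))).subset
    (fun e he => ⟨he.1, trivial⟩)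

theorem E_card [Fintype S] [Fintype X] (hk : 1 ≤ Fintype.card X) (hB : A.Bounded) (m : ℕ) :
    (A.E m).ncard ≤ Fintype.card S * (Fintype.card X ^ Fintype.card S *
      Fintype.card X ^ Fintype.card S) := by
  set n := Fintype.card S with hn
  have hfin : ∀ s : S, {v : List X | v.length = m ∧ ¬ A.IsTrivialState (A.sec s v)}.Finite :=
    fun s => (List.finite_length_eq X m).subset (fun v hv => hv.1)
  have key : ∀ s : S, {v : List X | v.length = m ∧ ¬ A.IsTrivialState (A.sec s v)}.ncard ≤
      Fintype.card X ^ n * Fintype.card X ^ n := by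
    intro s
    rcases le_or_gt n m with hm | hm
    · have h1 : {v : List X | v.length = m - n ∧ A.Live n (A.sec s v)}.ncard ≤
          Fintype.card X ^ n := by
        refine A.count_br hk n (m - n) n s ?_
        intro v _ _
        refine (A.br_le (A.noExit hB) v s).trans ?_
        rw [hn, ← Nat.card_eq_fintype_card]
        exact Set.ncard_le_card (Set.range (fun w => A.sec s w))
      refine ncard_cover (t := {v : List X | v.length = m - n ∧ A.Live n (A.sec s v)})
        ((List.finite_length_eq X (m - n)).subset (fun v hv => hv.1)) h1
        (fun v => (fun w => v ++ w) '' {w : List X | w.length = n}) ?_ ?_ ?_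
      · intro i _
        exact (List.finite_length_eq X n).image _
      · intro i _
        exact (Set.ncard_image_le (List.finite_length_eq X n)).trans (ncard_words n)
      · rintro v ⟨hv, hnt⟩
        refine ⟨v.take (m - n), ⟨by simp [hv], v.drop (m - n), by simp [hv]; omega, ?_⟩,
          v.drop (m - n), by simp [hv]; omega, by simp⟩
        rwa [← sec_append, List.take_append_drop]
    · refine (Set.ncard_le_ncard (fun v hv => hv.1) (List.finite_length_eq X m)).trans
        ((ncard_words m).trans ?_)
      calc Fintype.card X ^ m ≤ Fintype.card X ^ n := Nat.pow_le_pow_right hk hm.le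
        _ ≤ _ := Nat.le_mul_of_pos_right _ (Nat.pow_pos hk)
  refine ncard_cover (t := (Set.univ : Set S)) Set.finite_univ (by simp [Set.ncard_univ, hn])
    (fun s => (fun v => (v, s)) '' {v : List X | v.length = m ∧
      ¬ A.IsTrivialState (A.sec s v)}) ?_ ?_ ?_
  · intro s _
    exact (hfin s).image _
  · intro s _
    exact (Set.ncard_image_le (hfin s)).trans (key s)
  · rintro ⟨v, s⟩ hv
    exact ⟨s, trivial, v, hv, rfl⟩

end Part1

end Mealy

namespace Mealy

section Part2

variable {S X : Type} (A : Mealy S X)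

theorem eeq_refl (v : List X) : A.EEquiv v v := Relation.EqvGen.refl v

variable {A}

theorem eeq_symm {v u : List X} (h : A.EEquiv v u) : A.EEquiv u v := Relation.EqvGen.symm _ _ h

theorem eeq_trans {v u w : List X} (h : A.EEquiv v u) (h' : A.EEquiv u w) : A.EEquiv v w :=
  Relation.EqvGen.trans _ _ _ h h'

theorem eeq_of_state {s : S} {v : List X} (h : A.IsTrivialState (A.sec s v)) :
    A.EEquiv v (A.act s v) :=
  Relation.EqvGen.rel _ _ ⟨s, Or.inl ⟨h, rfl⟩⟩

/-- Induction principle for `e`-equivalence. -/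
theorem eeq_induction {R : List X → List X → Prop} (hr : ∀ v, R v v)
    (hs : ∀ v u, A.EEquiv v u → R v u → R u v) (ht : ∀ v u w, A.EEquiv v u → A.EEquiv u w → R v u → R u w → R v w)
    (hb : ∀ s v, A.IsTrivialState (A.sec s v) → R v (A.act s v))
    {v u : List X} (h : A.EEquiv v u) : R v u := by
  induction h with
  | rel v u h =>
    obtain ⟨s, ⟨h1, rfl⟩ | ⟨h1, rfl⟩⟩ := h
    · exact hb s v h1
    · exact hs _ _ (eeq_of_state h1) (hb s u h1)
  | refl v => exact hr v
  | symm v u h1 ih => exact hs _ _ h1 ih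
  | trans v u w h1 h2 ih1 ih2 => exact ht _ _ _ h1 h2 ih1 ih2

theorem eeq_length {v u : List X} (h : A.EEquiv v u) : v.length = u.length :=
  eeq_induction (R := fun v u => v.length = u.length) (fun _ => rfl) (fun _ _ _ h => h.symm)
    (fun _ _ _ _ _ h h' => h.trans h') (fun s v _ => (A.act_length s v).symm) h

theorem eeq_append {v u : List X} (h : A.EEquiv v u) (w : List X) :
    A.EEquiv (v ++ w) (u ++ w) :=
  eeq_induction (R := fun v u => A.EEquiv (v ++ w) (u ++ w)) (fun _ => A.eeq_refl _)
    (fun _ _ _ h => eeq_symm h) (fun _ _ _ _ _ h h' => eeq_trans h h')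
    (fun s v h => by
      have h1 : A.IsTrivialState (A.sec s (v ++ w)) := by
        rw [sec_append]; exact A.triv_sec h w
      have := eeq_of_state h1
      rwa [act_append, h w] at this) h

variable (A)

/-- section label of an edge -/
def lab (e : List X × S) : S := A.sec e.2 e.1

/-- end points of an edge -/
def ends (e : List X × S) (b : Bool) : List X := if b then A.act e.2 e.1 else e.1

/-- prolongation of an edge by a letter -/
def ext (e : List X × S) (x : X) : List X × S := (e.1 ++ [x], e.2)

/-- the last letter of an end point of a prolonged edge -/
def ol (t : S) (x : X) (b : Bool) : X := if b then (A.step t x).1 else x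

theorem ends_ext (e : List X × S) (x : X) (b : Bool) :
    A.ends (ext e x) b = A.ends e b ++ [A.ol (A.lab e) x b] := by
  cases b <;> simp [ends, ext, ol, lab, act_append, act]

theorem lab_ext (e : List X × S) (x : X) : A.lab (ext e x) = (A.step (A.lab e) x).2 := by
  simp [lab, ext, sec_append, sec]

theorem exists_ext {m : ℕ} {e : List X × S} (he : e ∈ A.E (m + 1)) :
    ∃ e' x, e' ∈ A.E m ∧ e = ext e' x := by
  obtain ⟨v, s⟩ := e
  obtain ⟨hl, hn⟩ := he
  rcases List.eq_nil_or_concat v with rfl | ⟨v', x, rfl⟩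
  · simp at hl
  · refine ⟨(v', s), x, ⟨by simpa using hl, fun ht => hn ?_⟩, by simp [ext]⟩
    simp only [List.concat_eq_append, sec_append]
    exact A.triv_sec ht _

theorem ext_mem {m : ℕ} {e : List X × S} {x : X} (he : e ∈ A.E m)
    (hn : ¬ A.IsTrivialState (A.step (A.lab e) x).2) : ext e x ∈ A.E (m + 1) := by
  refine ⟨by simp [ext, he.1], ?_⟩
  rw [← lab_ext] at hn
  exact hn

theorem ends_length (e : List X × S) (b : Bool) : (A.ends e b).length = e.1.length := by
  cases b <;> simp [ends, act_length]

/-- A correspondence between levels `i` and `j` preserving all data. -/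
structure Corr (i j : ℕ) (Φ : List X × S → List X × S → Prop) : Prop where
  left : ∀ e f, Φ e f → e ∈ A.E i
  right : ∀ e f, Φ e f → f ∈ A.E j
  lab : ∀ e f, Φ e f → A.lab e = A.lab f
  totl : ∀ e ∈ A.E i, ∃ f, Φ e f
  totr : ∀ f ∈ A.E j, ∃ e, Φ e f
  iff : ∀ e f e' f' b b', Φ e f → Φ e' f' →
    (A.EEquiv (A.ends e b) (A.ends e' b') ↔ A.EEquiv (A.ends f b) (A.ends f' b'))

variable {A}

theorem Corr.symm {i j : ℕ} {Φ : List X × S → List X × S → Prop} (h : A.Corr i j Φ) :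
    A.Corr j i (fun e f => Φ f e) where
  left e f hf := h.right _ _ hf
  right e f hf := h.left _ _ hf
  lab e f hf := (h.lab _ _ hf).symm
  totl := h.totr
  totr := h.totl
  iff e f e' f' b b' h1 h2 := (h.iff _ _ _ _ b b' h1 h2).symm

variable (A) in
theorem Corr.refl (i : ℕ) : A.Corr i i (fun e f => e = f ∧ e ∈ A.E i) where
  left e f h := h.2
  right e f h := h.1 ▸ h.2
  lab e f h := h.1 ▸ rfl
  totl e he := ⟨e, rfl, he⟩
  totr e he := ⟨e, rfl, he⟩
  iff e f e' f' b b' h1 h2 := by rw [h1.1, h2.1]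

theorem Corr.split {i j : ℕ} {Φ : List X × S → List X × S → Prop} (hΦ : A.Corr i j Φ)
    {w w' : List X} (h : A.EEquiv w w') : ∀ v x v' x', w = v ++ [x] → w' = v' ++ [x'] →
      v.length = i → (x = x' ∧ A.EEquiv v v') ∨
        ∃ e f b e' f' b', Φ e f ∧ Φ e' f' ∧ A.EEquiv v (A.ends e b) ∧
          A.EEquiv v' (A.ends e' b') ∧ A.EEquiv (A.ends f b ++ [x]) (A.ends f' b' ++ [x']) := by
  refine eeq_induction (R := fun w w' => ∀ v x v' x', w = v ++ [x] → w' = v' ++ [x'] →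
      v.length = i → (x = x' ∧ A.EEquiv v v') ∨
        ∃ e f b e' f' b', Φ e f ∧ Φ e' f' ∧ A.EEquiv v (A.ends e b) ∧
          A.EEquiv v' (A.ends e' b') ∧ A.EEquiv (A.ends f b ++ [x]) (A.ends f' b' ++ [x']))
    ?_ ?_ ?_ ?_ h
  · rintro w v x v' x' rfl hw' -
    obtain ⟨rfl, hx⟩ := List.append_inj' hw' rfl
    simp only [List.cons.injEq, and_true] at hx
    exact Or.inl ⟨hx, A.eeq_refl _⟩
  · intro w w' hww ih v x v' x' hw hw' hl
    have hlen : v'.length = i := by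
      have := eeq_length hww
      rw [hw, hw'] at this
      simp at this
      omega
    rcases ih v' x' v x hw' hw hlen with ⟨h1, h2⟩ | ⟨e, f, b, e', f', b', h1, h2, h3, h4, h5⟩
    · exact Or.inl ⟨h1.symm, eeq_symm h2⟩
    · exact Or.inr ⟨e', f', b', e, f, b, h2, h1, h4, h3, eeq_symm h5⟩
  · intro w1 w2 w3 h12 h23 ih1 ih2 v x v'' x'' hw hw'' hl
    have l12 := eeq_length h12
    rcases List.eq_nil_or_concat w2 with h0 | ⟨v', x', hw'⟩
    · rw [h0, hw] at l12; simp at l12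
    rw [List.concat_eq_append] at hw'
    have hl' : v'.length = i := by
      rw [hw, hw'] at l12; simp at l12; omega
    rcases ih1 v x v' x' hw hw' hl with ⟨rfl, h1⟩ | ⟨e, f, b, e', f', b', h1, h2, h3, h4, h5⟩
    · rcases ih2 v' x v'' x'' hw' hw'' hl' with
        ⟨rfl, h2⟩ | ⟨e, f, b, e', f', b', h6, h2, h3, h4, h5⟩
      · exact Or.inl ⟨rfl, eeq_trans h1 h2⟩
      · exact Or.inr ⟨e, f, b, e', f', b', h6, h2, eeq_trans h1 h3, h4, h5⟩
    · rcases ih2 v' x' v'' x'' hw' hw'' hl' with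
        ⟨rfl, k1⟩ | ⟨e1, f1, b1, e1', f1', b1', k1, k2, k3, k4, k5⟩
      · exact Or.inr ⟨e, f, b, e', f', b', h1, h2, h3, eeq_trans (eeq_symm k1) h4, h5⟩
      · refine Or.inr ⟨e, f, b, e1', f1', b1', h1, k2, h3, k4, ?_⟩
        have : A.EEquiv (A.ends f' b') (A.ends f1 b1) :=
          (hΦ.iff _ _ _ _ _ _ h2 k1).1 (eeq_trans (eeq_symm h4) k3)
        exact eeq_trans h5 (eeq_trans (eeq_append this _) k5)
  · rintro s w ht v x v' x' rfl hw' hl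
    rw [act_append] at hw'
    obtain ⟨rfl, hx⟩ := List.append_inj' hw' rfl
    simp only [act, List.cons.injEq, and_true] at hx
    rw [sec_append] at ht
    by_cases hv : A.IsTrivialState (A.sec s v)
    · refine Or.inl ⟨?_, eeq_of_state hv⟩
      have := hv [x]
      simp only [act, List.cons.injEq, and_true] at this
      rw [← hx, this]
    · have he : (v, s) ∈ A.E i := ⟨hl, hv⟩
      obtain ⟨f, hf⟩ := hΦ.totl _ he
      refine Or.inr ⟨(v, s), f, false, (v, s), f, true, hf, hf, A.eeq_refl _, A.eeq_refl _, ?_⟩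
      have hlab : A.sec f.2 f.1 = A.sec s v := (hΦ.lab _ _ hf).symm
      have h1 : A.IsTrivialState (A.sec f.2 (f.1 ++ [x])) := by
        rw [sec_append, hlab]; exact ht
      have := eeq_of_state h1
      rw [act_append, hlab] at this
      simpa [ends, act, hx] using this

theorem Corr.transport {i j : ℕ} {Φ : List X × S → List X × S → Prop} (hΦ : A.Corr i j Φ)
    {e f e' f' : List X × S} {b b' : Bool} {x x' : X} (h1 : Φ e f) (h2 : Φ e' f')
    (h : A.EEquiv (A.ends e b ++ [x]) (A.ends e' b' ++ [x'])) :
    A.EEquiv (A.ends f b ++ [x]) (A.ends f' b' ++ [x']) := by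
  have hl : (A.ends e b).length = i := by rw [ends_length]; exact (hΦ.left _ _ h1).1
  rcases hΦ.split h _ _ _ _ rfl rfl hl with ⟨rfl, k⟩ | ⟨e1, f1, b1, e2, f2, b2, k1, k2, k3, k4, k5⟩
  · exact eeq_append ((hΦ.iff _ _ _ _ _ _ h1 h2).1 k) _
  · exact eeq_trans (eeq_append ((hΦ.iff _ _ _ _ _ _ h1 k1).1 k3) _)
      (eeq_trans k5 (eeq_append ((hΦ.iff _ _ _ _ _ _ k2 h2).1 (eeq_symm k4)) _))

/-- next-level correspondence -/
def nextΦ (A : Mealy S X) (Φ : List X × S → List X × S → Prop) :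
    List X × S → List X × S → Prop := fun e' f' =>
  ∃ e f x, Φ e f ∧ ¬ A.IsTrivialState (A.step (A.lab e) x).2 ∧ e' = ext e x ∧ f' = ext f x

theorem Corr.next {i j : ℕ} {Φ : List X × S → List X × S → Prop} (hΦ : A.Corr i j Φ) :
    A.Corr (i + 1) (j + 1) (A.nextΦ Φ) where
  left := by
    rintro _ _ ⟨e, f, x, h, hn, rfl, rfl⟩
    exact A.ext_mem (hΦ.left _ _ h) hn
  right := by
    rintro _ _ ⟨e, f, x, h, hn, rfl, rfl⟩
    exact A.ext_mem (hΦ.right _ _ h) (by rwa [← hΦ.lab _ _ h])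
  lab := by
    rintro _ _ ⟨e, f, x, h, hn, rfl, rfl⟩
    rw [lab_ext, lab_ext, hΦ.lab _ _ h]
  totl := by
    intro e' he'
    obtain ⟨e, x, he, rfl⟩ := A.exists_ext he'
    obtain ⟨f, hf⟩ := hΦ.totl e he
    refine ⟨_, e, f, x, hf, ?_, rfl, rfl⟩
    rw [← lab_ext]; exact he'.2
  totr := by
    intro f' hf'
    obtain ⟨f, x, hf, rfl⟩ := A.exists_ext hf'
    obtain ⟨e, he⟩ := hΦ.totr f hf
    refine ⟨_, e, f, x, he, ?_, rfl, rfl⟩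
    rw [hΦ.lab _ _ he, ← lab_ext]; exact hf'.2
  iff := by
    rintro _ _ _ _ b b' ⟨e, f, x, h, hn, rfl, rfl⟩ ⟨e', f', x', h', hn', rfl, rfl⟩
    simp only [ends_ext, ← hΦ.lab _ _ h, ← hΦ.lab _ _ h']
    exact ⟨hΦ.transport h h', hΦ.symm.transport h h'⟩

/-- `w` is `e`-equivalent to an end point of a nontrivial edge. -/
def Active (A : Mealy S X) (w : List X) : Prop :=
  ∃ e ∈ A.E w.length, ∃ b, A.EEquiv w (A.ends e b)

/-- The class of `w ++ [x]` is strictly larger than the class of `w`, prolonged. -/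
def Mg (A : Mealy S X) (w : List X) (x : X) : Prop :=
  ∃ u y, A.EEquiv (u ++ [y]) (w ++ [x]) ∧ ¬ (y = x ∧ A.EEquiv u w)

/-- linked words -/
def Linked (A : Mealy S X) (w w' : List X) : Prop :=
  ∃ Φ, A.Corr w.length w'.length Φ ∧
    ∃ e f b, Φ e f ∧ A.EEquiv w (A.ends e b) ∧ A.EEquiv w' (A.ends f b)

theorem split_active {w w' : List X} {x x' : X} (h : A.EEquiv (w ++ [x]) (w' ++ [x'])) :
    (x = x' ∧ A.EEquiv w w') ∨ (A.Active w ∧ A.Active w') := by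
  have hl := eeq_length h
  simp only [List.length_append, List.length_cons, List.length_nil, zero_add,
    Nat.add_right_cancel_iff] at hl
  rcases (Corr.refl A w.length).split h _ _ _ _ rfl rfl rfl with
    k | ⟨e, f, b, e', f', b', k1, k2, k3, k4, -⟩
  · exact Or.inl k
  · exact Or.inr ⟨⟨e, k1.2, b, k3⟩, ⟨e', hl ▸ k2.2, b', k4⟩⟩

theorem Mg.active {w : List X} {x : X} (h : A.Mg w x) : A.Active w := by
  obtain ⟨u, y, h1, h2⟩ := h
  exact ((split_active h1).resolve_left h2).2

theorem Mg.congr {w u : List X} {x y : X} (h : A.Mg w x) (hu : A.EEquiv (u ++ [y]) (w ++ [x])) :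
    A.Mg u y := by
  by_cases hc : y = x ∧ A.EEquiv u w
  · obtain ⟨v, z, h1, h2⟩ := h
    refine ⟨v, z, eeq_trans h1 (eeq_symm hu), fun h3 => h2 ⟨h3.1.trans hc.1, eeq_trans h3.2 hc.2⟩⟩
  · exact ⟨w, x, eeq_symm hu, fun h3 => hc ⟨h3.1.symm, eeq_symm h3.2⟩⟩

theorem Active.parent {w : List X} {x : X} (h : A.Active (w ++ [x])) : A.Active w := by
  obtain ⟨e, he, b, h1⟩ := h
  simp only [List.length_append, List.length_cons, List.length_nil, zero_add] at he
  obtain ⟨e', y, he', rfl⟩ := A.exists_ext he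
  rw [ends_ext] at h1
  rcases split_active h1 with k | k
  · exact ⟨e', he', b, k.2⟩
  · exact k.1

theorem Active.shorter {w u : List X} (h : A.Active (w ++ u)) : A.Active w := by
  induction u using List.reverseRecOn with
  | nil => simpa using h
  | append_singleton u x ih =>
    rw [← List.append_assoc] at h
    exact ih h.parent

theorem Linked.active {w w' : List X} (h : A.Linked w w') : A.Active w' := by
  obtain ⟨Φ, hΦ, e, f, b, h1, h2, h3⟩ := h
  exact ⟨f, hΦ.right _ _ h1, b, h3⟩

theorem Linked.mg {w w' : List X} {x : X} (h : A.Linked w w') (hm : A.Mg w x) : A.Mg w' x := by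
  obtain ⟨Φ, hΦ, e, f, b, h1, h2, h3⟩ := h
  obtain ⟨u, y, hu, hn⟩ := hm
  have hul : u.length = w.length := by
    have := eeq_length hu
    simpa using this
  obtain ⟨e1, he1, b1, hb1⟩ := ((split_active hu).resolve_left hn).1
  rw [hul] at he1
  obtain ⟨f1, hf1⟩ := hΦ.totl _ he1
  have k1 : A.EEquiv (A.ends e1 b1 ++ [y]) (A.ends e b ++ [x]) :=
    eeq_trans (eeq_append (eeq_symm hb1) _) (eeq_trans hu (eeq_append h2 _))
  have k2 := hΦ.transport hf1 h1 k1
  refine ⟨A.ends f1 b1, y, eeq_trans k2 (eeq_append (eeq_symm h3) _), fun hc => hn ⟨hc.1, ?_⟩⟩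
  have := (hΦ.iff _ _ _ _ b1 b hf1 h1).2 (eeq_trans hc.2 h3)
  exact eeq_trans hb1 (eeq_trans this (eeq_symm h2))

theorem Linked.step {w w' : List X} {x : X} (h : A.Linked w w') (ha : A.Active (w ++ [x])) :
    A.Linked (w ++ [x]) (w' ++ [x]) := by
  obtain ⟨Φ, hΦ, e, f, b, h1, h2, h3⟩ := h
  obtain ⟨e', he', b1, hb1⟩ := ha
  have he'' := he'
  simp only [List.length_append, List.length_cons, List.length_nil, zero_add] at he''
  obtain ⟨e1, y, he1, rfl⟩ := A.exists_ext he''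
  obtain ⟨f1, hf1⟩ := hΦ.totl _ he1
  refine ⟨A.nextΦ Φ, by simpa using hΦ.next, ext e1 y, ext f1 y, b1,
    ⟨e1, f1, y, hf1, by rw [← lab_ext]; exact he'.2, rfl, rfl⟩, hb1, ?_⟩
  rw [ends_ext] at hb1
  rw [ends_ext, ← hΦ.lab _ _ hf1]
  refine eeq_trans (eeq_append h3 _) (hΦ.transport h1 hf1 ?_)
  exact eeq_trans (eeq_append (eeq_symm h2) _) hb1

theorem Linked.append {w w' : List X} (u : List X) (h : A.Linked w w')
    (ha : A.Active (w ++ u)) : A.Linked (w ++ u) (w' ++ u) := by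
  induction u generalizing w w' with
  | nil => simpa using h
  | cons x u ih =>
    have e1 : ∀ w : List X, w ++ x :: u = (w ++ [x]) ++ u := by simp
    rw [e1] at ha
    rw [e1, e1]
    exact ih (h.step ha.shorter) ha

/-- class of a word -/
def cls (A : Mealy S X) (w : List X) : Set (List X) := {u | A.EEquiv u w}

theorem cls_finite [Fintype X] (w : List X) : (A.cls w).Finite :=
  (List.finite_length_eq X w.length).subset (fun _ hu => eeq_length hu)

theorem cls_append_sub (w u : List X) : (fun v => v ++ u) '' A.cls w ⊆ A.cls (w ++ u) := by
  rintro _ ⟨v, hv, rfl⟩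
  exact eeq_append hv u

theorem cls_le [Fintype X] (w u : List X) : (A.cls w).ncard ≤ (A.cls (w ++ u)).ncard := by
  rw [← Set.ncard_image_of_injective (A.cls w) (List.append_left_injective u)]
  exact Set.ncard_le_ncard (cls_append_sub w u) (cls_finite _)

theorem Mg.cls_lt [Fintype X] {w : List X} {x : X} (h : A.Mg w x) :
    (A.cls w).ncard < (A.cls (w ++ [x])).ncard := by
  rw [← Set.ncard_image_of_injective (A.cls w) (List.append_left_injective [x])]
  refine Set.ncard_lt_ncard ⟨cls_append_sub w [x], fun hc => ?_⟩ (cls_finite _)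
  obtain ⟨u, y, h1, h2⟩ := h
  obtain ⟨v, hv, hvu⟩ := hc h1
  obtain ⟨rfl, hx⟩ := List.append_inj' hvu rfl
  simp only [List.cons.injEq, and_true] at hx
  exact h2 ⟨hx.symm, hv⟩

theorem pump [Fintype X] {p : List X} {x : X} {u : List X} (hl : A.Linked p (p ++ x :: u))
    (hm : A.Mg p x) (t : ℕ) : ∃ w, t ≤ (A.cls w).ncard := by
  have key : ∀ t : ℕ, ∃ q, A.Linked q (q ++ x :: u) ∧ A.Mg q x ∧ t ≤ (A.cls q).ncard := by
    intro t
    induction t with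
    | zero => exact ⟨p, hl, hm, Nat.zero_le _⟩
    | succ t ih =>
      obtain ⟨q, h1, h2, h3⟩ := ih
      refine ⟨q ++ x :: u, h1.append _ h1.active, h1.mg h2, ?_⟩
      have k1 := h2.cls_lt
      have k2 := cls_le (A := A) (q ++ [x]) u
      rw [List.append_assoc, List.singleton_append] at k2
      omega
  obtain ⟨q, -, -, h⟩ := key t
  exact ⟨q, h⟩

/-- Colors of words. -/
abbrev Color (S : Type) (N : ℕ) : Type :=
  (Fin (N + 1) → S → Prop) × (Fin (N + 1) × Bool → Fin (N + 1) × Bool → Prop) ×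
    (Fin (N + 1) × Bool → Prop)

/-- The color of a word. -/
def color (A : Mealy S X) {N : ℕ} (ι : ℕ → List X × S → Fin (N + 1)) (w : List X) : Color S N :=
  (fun i s => ∃ e ∈ A.E w.length, ι w.length e = i ∧ A.lab e = s,
   fun a a' => ∃ e ∈ A.E w.length, ∃ e' ∈ A.E w.length, ι w.length e = a.1 ∧
     ι w.length e' = a'.1 ∧ A.EEquiv (A.ends e a.2) (A.ends e' a'.2),
   fun a => ∃ e ∈ A.E w.length, ι w.length e = a.1 ∧ A.EEquiv w (A.ends e a.2))

theorem linked_of_color {N : ℕ} {ι : ℕ → List X × S → Fin (N + 1)}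
    (hι : ∀ m, Set.InjOn (ι m) (A.E m)) {w w' : List X} (ha : A.Active w)
    (hc : A.color ι w = A.color ι w') : A.Linked w w' := by
  simp only [color, Prod.mk.injEq, funext_iff, eq_iff_iff, Prod.forall] at hc
  obtain ⟨h1, h2, h3⟩ := hc
  refine ⟨fun e f => e ∈ A.E w.length ∧ f ∈ A.E w'.length ∧ ι w.length e = ι w'.length f,
    ⟨fun e f h => h.1, fun e f h => h.2.1, ?_, ?_, ?_, ?_⟩, ?_⟩
  · rintro e f ⟨he, hf, hef⟩
    obtain ⟨f', hf', k1, k2⟩ := (h1 _ _).1 ⟨e, he, rfl, rfl⟩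
    rw [hef] at k1
    rw [← k2, hι _ hf' hf k1]
  · intro e he
    obtain ⟨f', hf', k1, k2⟩ := (h1 _ _).1 ⟨e, he, rfl, rfl⟩
    exact ⟨f', he, hf', k1.symm⟩
  · intro f hf
    obtain ⟨e', he', k1, k2⟩ := (h1 _ _).2 ⟨f, hf, rfl, rfl⟩
    exact ⟨e', he', hf, k1⟩
  · rintro e f e' f' b b' ⟨he, hf, hef⟩ ⟨he', hf', hef'⟩
    constructor
    · intro h
      obtain ⟨g, hg, g', hg', k1, k2, k3⟩ := (h2 _ b _ b').1 ⟨e, he, e', he', rfl, rfl, h⟩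
      rw [hι _ hg hf (k1.trans hef), hι _ hg' hf' (k2.trans hef')] at k3
      exact k3
    · intro h
      obtain ⟨g, hg, g', hg', k1, k2, k3⟩ := (h2 _ b _ b').2 ⟨f, hf, f', hf', rfl, rfl, h⟩
      rw [hι _ hg he (k1.trans hef.symm), hι _ hg' he' (k2.trans hef'.symm)] at k3
      exact k3
  · obtain ⟨e, he, b, hb⟩ := ha
    obtain ⟨f, hf, k1, k2⟩ := (h3 _ b).1 ⟨e, he, rfl, hb⟩
    exact ⟨e, f, b, ⟨he, hf, k1.symm⟩, hb, k2⟩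

/-- merging prefixes of a word -/
def MP (A : Mealy S X) (v : List X) : Set (List X) := {p | ∃ x q, v = p ++ x :: q ∧ A.Mg p x}

theorem MP_finite (v : List X) : (A.MP v).Finite := by
  refine (List.finite_toSet v.inits).subset ?_
  rintro p ⟨x, q, rfl, -⟩
  simp

theorem MP_mono (v : List X) (x : X) : A.MP v ⊆ A.MP (v ++ [x]) := by
  rintro p ⟨y, q, rfl, h⟩
  exact ⟨y, q ++ [x], by simp, h⟩

theorem MP_lt {v : List X} {x : X} (h : A.Mg v x) : (A.MP v).ncard < (A.MP (v ++ [x])).ncard := by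
  refine Set.ncard_lt_ncard ⟨MP_mono v x, fun hc => ?_⟩ (MP_finite _)
  obtain ⟨y, q, h1, -⟩ := hc ⟨x, [], rfl, h⟩
  have := congrArg List.length h1
  simp at this

theorem MP_le [Fintype S] [Fintype X] {N : ℕ} (hN : ∀ m, (A.E m).ncard ≤ N)
    {K : ℕ} (hbd : ∀ w, (A.cls w).ncard ≤ K) (v : List X) :
    (A.MP v).ncard ≤ Nat.card (Color S N) := by
  have : ∀ m, ∃ f : List X × S → Fin (N + 1), Set.InjOn f (A.E m) := by
    intro m
    have hle : (A.E m).encard ≤ (Set.univ : Set (Fin (N + 1))).encard := by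
      rw [← (A.E_finite m).cast_ncard_eq, ← (Set.finite_univ).cast_ncard_eq]
      norm_cast
      rw [Set.ncard_univ, Nat.card_eq_fintype_card, Fintype.card_fin]
      exact (hN m).trans (Nat.le_succ _)
    obtain ⟨f, -, hf⟩ := (A.E_finite m).exists_injOn_of_encard_le hle
    exact ⟨f, hf⟩
  choose ι hι using this
  have aux : ∀ p ∈ A.MP v, ∀ p' ∈ A.MP v, A.color ι p = A.color ι p' →
      p.length ≤ p'.length → p = p' := by
    rintro p ⟨x, q, hv, hm⟩ p' ⟨x', q', hv', hm'⟩ hc hle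
    have hl := linked_of_color hι hm.active hc
    have hpre : p <+: p' := List.prefix_of_prefix_length_le ⟨x :: q, hv.symm⟩ ⟨x' :: q', hv'.symm⟩ hle
    obtain ⟨u, rfl⟩ := hpre
    cases u with
    | nil => simp
    | cons y u =>
      exfalso
      rw [hv] at hv'
      simp only [List.append_assoc, List.append_cancel_left_eq, List.cons_append,
        List.cons.injEq] at hv'
      obtain ⟨rfl, -⟩ := hv'
      obtain ⟨w, hw⟩ := pump hl hm (K + 1)
      have := hbd w
      omega
  have hinj : Set.InjOn (A.color ι) (A.MP v) := by
    intro p hp p' hp' hc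
    rcases le_total p.length p'.length with h | h
    · exact aux p hp p' hp' hc h
    · exact (aux p' hp' p hp hc.symm h).symm
  rw [← Set.ncard_image_of_injOn hinj]
  exact Set.ncard_le_card _

theorem cls_card [Fintype S] [Fintype X] {N : ℕ} (hN : ∀ m, (A.E m).ncard ≤ N) (m : ℕ) :
    ∀ (b : ℕ) (v : List X), v.length = m → (∀ u, A.EEquiv u v → (A.MP u).ncard ≤ b) →
      (A.cls v).ncard ≤ (N * (2 * Fintype.card X) + 1) ^ b := by
  induction m with
  | zero =>
    intro b v hv _
    have : A.cls v ⊆ {[]} := by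
      intro u hu
      have := eeq_length hu
      rw [hv] at this
      simpa using this
    refine (Set.ncard_le_ncard this).trans ?_
    rw [Set.ncard_singleton]
    exact Nat.one_le_pow _ _ (by omega)
  | succ m ih =>
    intro b v' hv' h
    rcases List.eq_nil_or_concat v' with rfl | ⟨v, x, hvx⟩
    · simp at hv'
    rw [List.concat_eq_append] at hvx
    subst hvx
    have hv : v.length = m := by simpa using hv'
    by_cases hm : A.Mg v x
    · have hb := (MP_lt hm).trans_le (h _ (A.eeq_refl _))
      obtain ⟨b, rfl⟩ := Nat.exists_eq_succ_of_ne_zero (by omega : b ≠ 0)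
      rw [Nat.succ_eq_add_one, pow_succ']
      refine le_trans ?_ (Nat.mul_le_mul_right _ (Nat.le_succ (N * (2 * Fintype.card X))))
      have hfin : (A.E m ×ˢ (Set.univ : Set (Bool × X))).Finite :=
        (A.E_finite m).prod Set.finite_univ
      refine ncard_cover (t := {a ∈ A.E m ×ˢ (Set.univ : Set (Bool × X)) |
          A.EEquiv (A.ends a.1 a.2.1 ++ [a.2.2]) (v ++ [x])}) (hfin.subset (Set.sep_subset _ _)) ?_
          (fun a => (fun w => w ++ [a.2.2]) '' A.cls (A.ends a.1 a.2.1)) ?_ ?_ ?_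
      · refine (Set.ncard_le_ncard (Set.sep_subset _ _) hfin).trans ?_
        rw [Set.ncard_prod]
        refine Nat.mul_le_mul (hN m) ?_
        rw [Set.ncard_univ, Nat.card_eq_fintype_card]
        simp
      · intro a _
        exact (cls_finite _).image _
      · rintro ⟨e, c, y⟩ ⟨⟨he, -⟩, ha⟩
        refine (Set.ncard_image_le (cls_finite _)).trans (ih b _ ?_ ?_)
        · rw [ends_length]; exact he.1
        · intro u hu
          have h1 : A.EEquiv (u ++ [y]) (v ++ [x]) := eeq_trans (eeq_append hu _) ha
          have h2 := h _ h1
          have h3 := MP_lt (hm.congr h1)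
          omega
      · intro w hw
        have hwl : w.length = m + 1 := by rw [eeq_length hw, hv']
        rcases List.eq_nil_or_concat w with rfl | ⟨u, y, hu⟩
        · simp at hwl
        rw [List.concat_eq_append] at hu
        subst hu
        have hul : u.length = m := by simpa using hwl
        obtain ⟨e, he, c, hc⟩ := (hm.congr hw).active
        rw [hul] at he
        exact ⟨(e, c, y), ⟨⟨he, trivial⟩, eeq_trans (eeq_append (eeq_symm hc) _) hw⟩, u, hc, rfl⟩
    · have hsub : A.cls (v ++ [x]) ⊆ (fun w => w ++ [x]) '' A.cls v := by
        intro w hw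
        have hwl : w.length = m + 1 := by rw [eeq_length hw, hv']
        rcases List.eq_nil_or_concat w with rfl | ⟨u, y, hu⟩
        · simp at hwl
        rw [List.concat_eq_append] at hu
        subst hu
        by_contra hc
        refine hm ⟨u, y, hw, fun hh => hc ?_⟩
        obtain ⟨rfl, h2⟩ := hh
        exact ⟨u, h2, rfl⟩
      refine (Set.ncard_le_ncard hsub ((cls_finite _).image _)).trans
        ((Set.ncard_image_le (cls_finite _)).trans (ih b v hv ?_))
      intro u hu
      exact (Set.ncard_le_ncard (MP_mono u x) (MP_finite _)).trans (h _ (eeq_append hu _))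

theorem orbit_card [Fintype S] [Fintype X] {N K : ℕ} (hN : ∀ m, (A.E m).ncard ≤ N)
    (hbd : ∀ w, (A.cls w).ncard ≤ K) (v : List X) :
    ∃ O : Set (List X), O.Finite ∧ v ∈ O ∧ (∀ w ∈ O, ∀ s, A.act s w ∈ O) ∧
      O.ncard ≤ (N * 2 + 1) * K := by
  set O : Set (List X) := {w | w ∈ A.cls v ∨ ∃ e ∈ A.E v.length, ∃ b, w ∈ A.cls (A.ends e b)} with hO
  have hlen : ∀ w ∈ O, w.length = v.length := by
    rintro w (h | ⟨e, he, b, h⟩)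
    · exact eeq_length h
    · rw [eeq_length h, ends_length]; exact he.1
  have hfinO : O.Finite := (List.finite_length_eq X v.length).subset hlen
  refine ⟨O, hfinO, Or.inl (A.eeq_refl _), ?_, ?_⟩
  · intro w hw s
    by_cases ht : A.IsTrivialState (A.sec s w)
    · have h1 := eeq_symm (eeq_of_state ht)
      rcases hw with h | ⟨e, he, b, h⟩
      · exact Or.inl (eeq_trans h1 h)
      · exact Or.inr ⟨e, he, b, eeq_trans h1 h⟩
    · exact Or.inr ⟨(w, s), ⟨hlen w hw, ht⟩, true, A.eeq_refl _⟩
  · have hfin : (A.E v.length ×ˢ (Set.univ : Set Bool)).Finite :=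
      (A.E_finite _).prod Set.finite_univ
    have h2 : {w | ∃ e ∈ A.E v.length, ∃ b, w ∈ A.cls (A.ends e b)}.ncard ≤ (N * 2) * K := by
      refine ncard_cover (t := A.E v.length ×ˢ (Set.univ : Set Bool)) hfin ?_
        (fun a => A.cls (A.ends a.1 a.2)) (fun a _ => cls_finite _) (fun a _ => hbd _) ?_
      · rw [Set.ncard_prod]
        refine Nat.mul_le_mul (hN _) ?_
        rw [Set.ncard_univ, Nat.card_eq_fintype_card]
        simp
      · rintro w ⟨e, he, b, h⟩
        exact ⟨(e, b), ⟨he, trivial⟩, h⟩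
    have h1 := hbd v
    have h3 : O = A.cls v ∪ {w | ∃ e ∈ A.E v.length, ∃ b, w ∈ A.cls (A.ends e b)} := rfl
    rw [h3]
    refine (Set.ncard_union_le _ _).trans ?_
    rw [Nat.add_mul]
    omega

end Part2

end Mealy

namespace Mealy

section Part3

variable {S X : Type} {A : Mealy S X}

theorem act_inj (hA : A.Invertible) (v : List X) :
    ∀ (s : S) (u : List X), A.act s v = A.act s u → v = u := by
  induction v with
  | nil =>
    intro s u h
    cases u with
    | nil => rfl
    | cons y u => simp [act] at h
  | cons x v ih =>
    intro s u h
    cases u with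
    | nil => simp [act] at h
    | cons y u =>
      simp only [act, List.cons.injEq] at h
      have hxy : x = y := (hA s).1 h.1
      subst hxy
      rw [ih _ _ h.2]

theorem act_surj (hA : A.Invertible) (v : List X) : ∀ s : S, ∃ u, A.act s u = v := by
  induction v with
  | nil => exact fun s => ⟨[], rfl⟩
  | cons x v ih =>
    intro s
    obtain ⟨y, hy⟩ := (hA s).2 x
    obtain ⟨u, hu⟩ := ih (A.step s y).2
    refine ⟨y :: u, ?_⟩
    simp only [act, hu]
    simp only at hy
    rw [hy]

/-- The permutation of words defined by a state. -/
noncomputable def stPerm (hA : A.Invertible) (s : S) : Equiv.Perm (List X) :=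
  Equiv.ofBijective (A.act s) ⟨fun _ _ h => act_inj hA _ _ _ h, fun v => act_surj hA v s⟩

theorem stPerm_mem (hA : A.Invertible) (s : S) : stPerm hA s ∈ A.autGroup :=
  Subgroup.subset_closure ⟨s, fun _ => rfl⟩

theorem eeq_group (hA : A.Invertible) {v u : List X} (h : A.EEquiv v u) :
    ∃ g ∈ A.autGroup, g v = u := by
  refine eeq_induction (R := fun v u => ∃ g ∈ A.autGroup, g v = u) ?_ ?_ ?_ ?_ h
  · exact fun v => ⟨1, one_mem _, rfl⟩
  · rintro v u - ⟨g, hg, rfl⟩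
    exact ⟨g⁻¹, inv_mem hg, by simp⟩
  · rintro v u w - - ⟨g, hg, rfl⟩ ⟨g', hg', rfl⟩
    exact ⟨g' * g, mul_mem hg' hg, rfl⟩
  · intro s v _
    exact ⟨stPerm hA s, stPerm_mem hA s, rfl⟩

theorem cls_le_card (hA : A.Invertible) (hf : Finite A.autGroup) (w : List X) :
    (A.cls w).ncard ≤ Nat.card A.autGroup := by
  have hsub : A.cls w ⊆ (fun g : A.autGroup => (g : Equiv.Perm (List X)) w) '' Set.univ := by
    intro u hu
    obtain ⟨g, hg, rfl⟩ := eeq_group hA (eeq_symm hu)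
    exact ⟨⟨g, hg⟩, trivial, rfl⟩
  refine (Set.ncard_le_ncard hsub (Set.finite_univ.image _)).trans ?_
  refine (Set.ncard_image_le Set.finite_univ).trans ?_
  rw [Set.ncard_univ]

/-- Bound for the number of nontrivial edges. -/
def bN (n k : ℕ) : ℕ := n * (k ^ n * k ^ n)

/-- Bound for the number of colors. -/
def bV (n k : ℕ) : ℕ :=
  (2 ^ n) ^ (bN n k + 1) * ((2 ^ ((bN n k + 1) * 2)) ^ ((bN n k + 1) * 2) *
    2 ^ ((bN n k + 1) * 2))

/-- Bound for the orbits (plus one). -/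
def bD (n k : ℕ) : ℕ := (bN n k * 2 + 1) * (bN n k * (2 * k) + 1) ^ bV n k + 1

/-- Bound for the word length. -/
def bB (n k : ℕ) : ℕ := bD n k ^ ((bD n k ^ bD n k) ^ n * bD n k)

/-- Bound for the level. -/
def bL (n k : ℕ) : ℕ := (n + 1) ^ (bB n k + bB n k)

theorem card_color [Fintype S] (N : ℕ) : Nat.card (Color S N) =
    (2 ^ Fintype.card S) ^ (N + 1) * ((2 ^ ((N + 1) * 2)) ^ ((N + 1) * 2) *
      2 ^ ((N + 1) * 2)) := by
  simp [Color, Nat.card_prod, Nat.card_fun]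

theorem orbit_bound [Fintype S] [Fintype X] [Nonempty X] (hA : A.Invertible) (hB : A.Bounded)
    (hf : Finite A.autGroup) (v : List X) :
    ∃ O : Set (List X), O.Finite ∧ v ∈ O ∧ (∀ w ∈ O, ∀ s, A.act s w ∈ O) ∧
      O.ncard ≤ bD (Fintype.card S) (Fintype.card X) := by
  have hN : ∀ m, (A.E m).ncard ≤ bN (Fintype.card S) (Fintype.card X) :=
    fun m => A.E_card Fintype.card_pos hB m
  have hV : ∀ u, (A.MP u).ncard ≤ bV (Fintype.card S) (Fintype.card X) := by
    intro u
    refine (MP_le hN (cls_le_card hA hf) u).trans ?_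
    rw [card_color]
    exact le_rfl
  have hK : ∀ w, (A.cls w).ncard ≤ (bN (Fintype.card S) (Fintype.card X) *
      (2 * Fintype.card X) + 1) ^ bV (Fintype.card S) (Fintype.card X) :=
    fun w => cls_card hN _ _ w rfl (fun u _ => hV u)
  obtain ⟨O, h1, h2, h3, h4⟩ := orbit_card hN hK v
  exact ⟨O, h1, h2, h3, h4.trans (Nat.le_succ _)⟩

/-- Action of a word of states. -/
def actL (A : Mealy S X) (g : List S) (v : List X) : List X := g.foldr A.act v

/-- Section of a word of states. -/
def secL (A : Mealy S X) : List S → List X → List S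
  | [], _ => []
  | s :: g, v => A.sec s (A.actL g v) :: A.secL g v

theorem actL_append (g h : List S) (v : List X) : A.actL (g ++ h) v = A.actL g (A.actL h v) := by
  simp [actL]

theorem actL_cons (s : S) (g : List S) (v : List X) : A.actL (s :: g) v = A.act s (A.actL g v) := rfl

theorem actL_word (g : List S) (v w : List X) :
    A.actL g (v ++ w) = A.actL g v ++ A.actL (A.secL g v) w := by
  induction g with
  | nil => rfl
  | cons s g ih => rw [actL_cons, ih, act_append]; rfl

theorem secL_length (g : List S) (v : List X) : (A.secL g v).length = g.length := by
  induction g with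
  | nil => rfl
  | cons s g ih => simp [secL, ih]

theorem actL_length (g : List S) (v : List X) : (A.actL g v).length = v.length := by
  induction g with
  | nil => rfl
  | cons s g ih => rw [actL_cons, act_length, ih]

theorem table [Fintype S] {D : ℕ} (hD : 0 < D)
    (hO : ∀ v, ∃ O : Set (List X), O.Finite ∧ v ∈ O ∧ (∀ w ∈ O, ∀ s, A.act s w ∈ O) ∧ O.ncard ≤ D)
    {g h : List S}
    (hgh : ∀ (ρ : S → Fin D → Fin D) (p : Fin D), g.foldr ρ p = h.foldr ρ p) :
    A.actL g = A.actL h := by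
  funext v
  obtain ⟨O, hfin, hv, hcl, hcard⟩ := hO v
  haveI : Nonempty (Fin D) := ⟨⟨0, hD⟩⟩
  have hle : O.encard ≤ (Set.univ : Set (Fin D)).encard := by
    rw [← hfin.cast_ncard_eq, ← (Set.finite_univ).cast_ncard_eq]
    norm_cast
    rw [Set.ncard_univ, Nat.card_eq_fintype_card, Fintype.card_fin]
    exact hcard
  obtain ⟨f, -, hf⟩ := hfin.exists_injOn_of_encard_le hle
  let ρ : S → Fin D → Fin D := fun s d => f (A.act s (Function.invFunOn f O d))
  have key : ∀ g : List S, A.actL g v ∈ O ∧ g.foldr ρ (f v) = f (A.actL g v) := by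
    intro g
    induction g with
    | nil => exact ⟨hv, rfl⟩
    | cons s g ih =>
      refine ⟨hcl _ ih.1 s, ?_⟩
      rw [List.foldr_cons, ih.2, actL_cons]
      simp only [ρ]
      rw [hf.leftInvOn_invFunOn ih.1]
  refine hf (key g).1 (key h).1 ?_
  rw [← (key g).2, ← (key h).2, hgh]

theorem shorten [Fintype S] {D : ℕ} (hD : 0 < D)
    (hO : ∀ v, ∃ O : Set (List X), O.Finite ∧ v ∈ O ∧ (∀ w ∈ O, ∀ s, A.act s w ∈ O) ∧ O.ncard ≤ D)
    (g : List S) (hg : g.length = D ^ ((D ^ D) ^ Fintype.card S * D)) :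
    ∃ h : List S, h.length < g.length ∧ A.actL g = A.actL h := by
  classical
  let Φ : Fin (g.length + 1) → ((S → Fin D → Fin D) × Fin D → Fin D) :=
    fun i a => (g.drop i).foldr a.1 a.2
  have hni : ¬ Function.Injective Φ := by
    intro hinj
    have := Fintype.card_le_of_injective Φ hinj
    simp only [Fintype.card_fin, Fintype.card_pi, Finset.prod_const, Finset.card_univ,
      Fintype.card_prod] at this
    omega
  have : ∃ i j : Fin (g.length + 1), i < j ∧ Φ i = Φ j := by
    simp only [Function.Injective, not_forall] at hni
    obtain ⟨i, j, hij, hne⟩ := hni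
    rcases lt_or_gt_of_ne hne with h | h
    · exact ⟨i, j, h, hij⟩
    · exact ⟨j, i, h, hij.symm⟩
  obtain ⟨i, j, hij, hΦ⟩ := this
  have h1 : A.actL (g.drop i) = A.actL (g.drop j) :=
    table hD hO (fun ρ p => congrFun hΦ (ρ, p))
  refine ⟨g.take i ++ g.drop j, ?_, ?_⟩
  · have hi := i.2
    have hj := j.2
    have : (i : ℕ) < j := hij
    simp only [List.length_append, List.length_take, List.length_drop]
    omega
  · funext v
    rw [actL_append, ← h1, ← actL_append, List.take_append_drop]

/-- pairs of words of states distinguished at depth at most `d` -/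
def Dp (A : Mealy S X) (a b d : ℕ) : Set (List S × List S) :=
  {p | (p.1.length = a ∧ p.2.length = b) ∧ ∃ u, u.length ≤ d ∧ A.actL p.1 u ≠ A.actL p.2 u}

theorem pairs_finite [Fintype S] (a b : ℕ) :
    ({g : List S | g.length = a} ×ˢ {g : List S | g.length = b}).Finite :=
  (List.finite_length_eq S a).prod (List.finite_length_eq S b)

theorem Dp_finite [Fintype S] (a b d : ℕ) : (A.Dp a b d).Finite :=
  (pairs_finite a b).subset (fun _ hp => ⟨hp.1.1, hp.1.2⟩)

theorem Dp_card [Fintype S] (a b d : ℕ) :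
    (A.Dp a b d).ncard ≤ Fintype.card S ^ a * Fintype.card S ^ b := by
  refine (Set.ncard_le_ncard (t := {g : List S | g.length = a} ×ˢ {g : List S | g.length = b})
    (fun _ hp => ⟨hp.1.1, hp.1.2⟩) (pairs_finite a b)).trans ?_
  rw [Set.ncard_prod]
  exact Nat.mul_le_mul (ncard_words a) (ncard_words b)

theorem depth [Fintype S] (a b d : ℕ) : ∀ g h : List S, g.length = a → h.length = b →
    (∃ v, v.length = d ∧ A.actL g v ≠ A.actL h v) →
    (∀ u : List X, u.length < d → A.actL g u = A.actL h u) → d ≤ (A.Dp a b d).ncard := by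
  induction d with
  | zero => intros; exact Nat.zero_le _
  | succ d ih =>
    rintro g h hg hh ⟨v, hv, hne⟩ hag
    have hlt : (A.Dp a b d).ncard < (A.Dp a b (d + 1)).ncard := by
      refine Set.ncard_lt_ncard ⟨?_, fun hc => ?_⟩ (Dp_finite a b _)
      · rintro p ⟨h1, u, h2, h3⟩
        exact ⟨h1, u, by omega, h3⟩
      · obtain ⟨-, u, h2, h3⟩ := hc (⟨⟨hg, hh⟩, v, hv.le, hne⟩ : (g, h) ∈ A.Dp a b (d + 1))
        exact h3 (hag u (by omega))
    rcases Nat.eq_zero_or_pos d with rfl | hd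
    · omega
    · cases v with
      | nil => simp at hv
      | cons x w =>
        have hx : A.actL g [x] = A.actL h [x] := hag [x] (by simpa using hd)
        have hcon : ∀ u, A.actL (A.secL g [x]) u = A.actL (A.secL h [x]) u ↔
            A.actL g (x :: u) = A.actL h (x :: u) := by
          intro u
          have e : x :: u = [x] ++ u := rfl
          rw [e, actL_word, actL_word, hx]
          simp
        have := ih (A.secL g [x]) (A.secL h [x]) (by rw [secL_length, hg])
          (by rw [secL_length, hh]) ⟨w, by simpa using hv, fun hc => hne ((hcon w).1 hc)⟩
          (fun u hu => (hcon u).2 (hag _ (by simpa using hu)))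
        omega

theorem eq_test [Fintype S] [Nonempty X] {B : ℕ} {g h : List S} (hg : g.length ≤ B)
    (hh : h.length ≤ B)
    (H : ∀ v : List X, v.length = (Fintype.card S + 1) ^ (B + B) → A.actL g v = A.actL h v) :
    A.actL g = A.actL h := by
  classical
  by_contra hne
  have hex : ∃ d, ∃ v : List X, v.length = d ∧ A.actL g v ≠ A.actL h v := by
    by_contra hc
    push Not at hc
    exact hne (funext fun v => hc _ v rfl)
  have h1 := Nat.find_spec hex
  have h2 := fun m => Nat.find_min (m := m) hex
  set d := Nat.find hex
  have hd := depth g.length h.length d g h rfl rfl h1 (fun u hu => by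
    by_contra hc
    exact h2 _ hu ⟨u, rfl, hc⟩)
  have hL : d ≤ (Fintype.card S + 1) ^ (B + B) := by
    refine hd.trans ((Dp_card _ _ _).trans ?_)
    rw [pow_add]
    refine Nat.mul_le_mul ?_ ?_
    · exact (Nat.pow_le_pow_left (Nat.le_succ _) _).trans (Nat.pow_le_pow_right (Nat.succ_pos _) hg)
    · exact (Nat.pow_le_pow_left (Nat.le_succ _) _).trans (Nat.pow_le_pow_right (Nat.succ_pos _) hh)
  obtain ⟨v, hv, hvne⟩ := h1
  obtain ⟨x⟩ := ‹Nonempty X›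
  have := H (v ++ List.replicate ((Fintype.card S + 1) ^ (B + B) - d) x) (by
    simp only [List.length_append, List.length_replicate]
    omega)
  rw [actL_word, actL_word] at this
  exact hvne (List.append_inj this (by rw [actL_length, actL_length])).1

theorem finite_of_short [Fintype S] {B : ℕ}
    (H : ∀ g : List S, g.length = B → ∃ h : List S, h.length < B ∧ A.actL g = A.actL h) :
    Finite A.autGroup := by
  have red : ∀ (m : ℕ) (g : List S), g.length = m →
      ∃ h : List S, h.length < B ∧ A.actL g = A.actL h := by
    intro m
    induction m using Nat.strong_induction_on with
    | _ m ih =>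
      intro g hg
      by_cases hm : m < B
      · exact ⟨g, hg ▸ hm, rfl⟩
      · obtain ⟨h, hh, he⟩ := H (g.drop (m - B)) (by rw [List.length_drop]; omega)
        obtain ⟨h', hh', he'⟩ := ih (g.take (m - B) ++ h).length (by
          simp only [List.length_append, List.length_take]; omega) _ rfl
        refine ⟨h', hh', ?_⟩
        rw [← he']
        funext v
        rw [actL_append, ← he, ← actL_append, List.take_append_drop]
  set T : Set (Equiv.Perm (List X)) := {f | ∃ g, ∀ v, f v = A.actL g v} with hT
  have hTfin : T.Finite := by
    have h1 : (A.actL '' {h : List S | h.length < B}).Finite :=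
      (List.finite_length_lt S B).image _
    refine (h1.preimage (f := fun f : Equiv.Perm (List X) => (f : List X → List X))
      (fun f _ f' _ h => Equiv.coe_fn_injective h)).subset ?_
    rintro f ⟨g, hg⟩
    obtain ⟨h, hh, he⟩ := red _ g rfl
    refine ⟨h, hh, ?_⟩
    rw [← he]
    funext v
    exact (hg v).symm
  have hone : (1 : Equiv.Perm (List X)) ∈ T := ⟨[], fun v => rfl⟩
  have hmul : ∀ f f', f ∈ T → f' ∈ T → f * f' ∈ T := by
    rintro f f' ⟨g, hg⟩ ⟨g', hg'⟩
    exact ⟨g ++ g', fun v => by rw [actL_append, ← hg', ← hg]; rfl⟩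
  have hinv : ∀ f, f ∈ T → f⁻¹ ∈ T := by
    intro f hf
    have hp : (Submonoid.powers f : Set (Equiv.Perm (List X))) ⊆ T := by
      rintro _ ⟨m, rfl⟩
      induction m with
      | zero => simpa using hone
      | succ m ih => simpa [pow_succ] using hmul _ _ ih hf
    have ho : IsOfFinOrder f := finite_powers.1 (hTfin.subset hp)
    refine hp ?_
    rw [SetLike.mem_coe, ho.mem_powers_iff_mem_zpowers]
    exact inv_mem (Subgroup.mem_zpowers f)
  have hsub : (A.autGroup : Set (Equiv.Perm (List X))) ⊆ T := by
    intro f hf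
    refine Subgroup.closure_induction (p := fun f _ => f ∈ T) ?_ hone
      (fun f f' _ _ h h' => hmul f f' h h') (fun f _ h => hinv f h) hf
    rintro f ⟨s, hs⟩
    exact ⟨[s], fun v => by rw [hs]; rfl⟩
  exact (hTfin.subset hsub).to_subtype

theorem finite_iff_check [Fintype S] [Fintype X] [Nonempty X] (hA : A.Invertible)
    (hB : A.Bounded) : Finite A.autGroup ↔
      ∀ g : List S, g.length = bB (Fintype.card S) (Fintype.card X) →
        ∃ h : List S, h.length < bB (Fintype.card S) (Fintype.card X) ∧
          ∀ v : List X, v.length = bL (Fintype.card S) (Fintype.card X) →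
            A.actL g v = A.actL h v := by
  constructor
  · intro hf g hg
    obtain ⟨h, h1, h2⟩ := shorten (A := A) (D := bD (Fintype.card S) (Fintype.card X))
      (Nat.succ_pos _) (orbit_bound hA hB hf) g hg
    exact ⟨h, hg ▸ h1, fun v _ => by rw [h2]⟩
  · intro H
    refine finite_of_short (B := bB (Fintype.card S) (Fintype.card X)) (fun g hg => ?_)
    obtain ⟨h, h1, h2⟩ := H g hg
    exact ⟨h, h1, eq_test hg.le h1.le h2⟩

end Part3

end Mealy

namespace MealyComp

/-- one step on codes -/
def stepN (a : ℕ × List ℕ) (s x : ℕ) : ℕ × ℕ := (a.2.getD (s * a.1 + x) 0).unpair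

/-- fold step -/
def foldN (a : ℕ × List ℕ) (q : ℕ × List ℕ) (x : ℕ) : ℕ × List ℕ :=
  ((stepN a q.1 x).2, q.2 ++ [(stepN a q.1 x).1])

/-- action of a state on codes -/
def actN (a : ℕ × List ℕ) (s : ℕ) (v : List ℕ) : List ℕ := (v.foldl (foldN a) (s, [])).2

/-- action of a word of states on codes -/
def actLN (a : ℕ × List ℕ) (g v : List ℕ) : List ℕ := g.foldr (actN a) v

/-- all words of length `r` over `0, …, a-1` -/
def wordsN (a r : ℕ) : List (List ℕ) :=
  Nat.rec [[]] (fun _ l => l.flatMap fun w => (List.range a).map fun i => i :: w) r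

/-- all words of length `< r` -/
def shortN (a r : ℕ) : List (List ℕ) := (List.range r).flatMap fun i => wordsN a i

theorem pow_primrec : Primrec₂ (fun a b : ℕ => a ^ b) :=
  Primrec₂.unpaired'.1 Nat.Primrec.pow

theorem stepN_primrec : Primrec fun p : (ℕ × List ℕ) × ℕ × ℕ => stepN p.1 p.2.1 p.2.2 := by
  unfold stepN
  refine Primrec.unpair.comp ?_
  refine (Primrec.list_getD 0).comp (Primrec.snd.comp Primrec.fst) ?_
  exact Primrec.nat_add.comp (Primrec.nat_mul.comp (Primrec.fst.comp Primrec.snd)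
    (Primrec.fst.comp Primrec.fst)) (Primrec.snd.comp Primrec.snd)

theorem foldN_primrec : Primrec fun p : (ℕ × List ℕ) × (ℕ × List ℕ) × ℕ =>
    foldN p.1 p.2.1 p.2.2 := by
  have h : Primrec fun p : (ℕ × List ℕ) × (ℕ × List ℕ) × ℕ => stepN p.1 p.2.1.1 p.2.2 :=
    stepN_primrec.comp (Primrec.pair Primrec.fst (Primrec.pair
      (Primrec.fst.comp (Primrec.fst.comp Primrec.snd)) (Primrec.snd.comp Primrec.snd)))
  unfold foldN
  exact Primrec.pair (Primrec.snd.comp h)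
    (Primrec.list_concat.comp (Primrec.snd.comp (Primrec.fst.comp Primrec.snd))
      (Primrec.fst.comp h))

theorem actN_primrec : Primrec fun p : (ℕ × List ℕ) × ℕ × List ℕ => actN p.1 p.2.1 p.2.2 := by
  unfold actN
  refine Primrec.snd.comp ?_
  refine Primrec.list_foldl (h := fun (p : (ℕ × List ℕ) × ℕ × List ℕ) (q : (ℕ × List ℕ) × ℕ) =>
    foldN p.1 q.1 q.2) (Primrec.snd.comp Primrec.snd)
    (Primrec.pair (Primrec.fst.comp Primrec.snd) (Primrec.const [])) ?_
  exact foldN_primrec.comp (Primrec.pair (Primrec.fst.comp Primrec.fst) Primrec.snd)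

theorem actLN_primrec : Primrec fun p : (ℕ × List ℕ) × List ℕ × List ℕ =>
    actLN p.1 p.2.1 p.2.2 := by
  unfold actLN
  refine Primrec.list_foldr (h := fun (p : (ℕ × List ℕ) × List ℕ × List ℕ) (q : ℕ × List ℕ) =>
    actN p.1 q.1 q.2) (Primrec.fst.comp Primrec.snd) (Primrec.snd.comp Primrec.snd) ?_
  exact actN_primrec.comp (Primrec.pair (Primrec.fst.comp Primrec.fst) Primrec.snd)

theorem wordsN_primrec : Primrec₂ wordsN := by
  unfold wordsN
  have h : Primrec₂ fun (p : ℕ × List ℕ) (i : ℕ) => i :: p.2 :=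
    Primrec.list_cons.comp Primrec.snd (Primrec.snd.comp Primrec.fst)
  have h2 : Primrec fun p : ℕ × List ℕ => (List.range p.1).map fun i => i :: p.2 :=
    Primrec.list_map (Primrec.list_range.comp Primrec.fst) h
  refine Primrec.nat_rec (f := fun _ : ℕ => [[]])
    (g := fun (a : ℕ) (q : ℕ × List (List ℕ)) => q.2.flatMap fun w =>
      (List.range a).map fun i => i :: w) (Primrec.const _) ?_
  refine Primrec.list_flatMap (Primrec.snd.comp Primrec.snd) ?_
  exact h2.comp (Primrec.pair (Primrec.fst.comp Primrec.fst) Primrec.snd)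

theorem shortN_primrec : Primrec₂ shortN := by
  unfold shortN
  refine Primrec.list_flatMap (Primrec.list_range.comp Primrec.snd) ?_
  exact wordsN_primrec.comp (Primrec.fst.comp Primrec.fst) Primrec.snd

section bounds
open Mealy

theorem bN_primrec : Primrec fun p : ℕ × ℕ => bN p.1 p.2 := by
  unfold bN
  have h : Primrec fun p : ℕ × ℕ => p.2 ^ p.1 := pow_primrec.comp Primrec.snd Primrec.fst
  exact Primrec.nat_mul.comp Primrec.fst (Primrec.nat_mul.comp h h)

theorem bV_primrec : Primrec fun p : ℕ × ℕ => bV p.1 p.2 := by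
  unfold bV
  have h1 : Primrec fun p : ℕ × ℕ => bN p.1 p.2 + 1 := Primrec.succ.comp bN_primrec
  have h2 : Primrec fun p : ℕ × ℕ => (bN p.1 p.2 + 1) * 2 :=
    Primrec.nat_mul.comp h1 (Primrec.const 2)
  have h3 : Primrec fun p : ℕ × ℕ => 2 ^ ((bN p.1 p.2 + 1) * 2) :=
    pow_primrec.comp (Primrec.const 2) h2
  have h4 : Primrec fun p : ℕ × ℕ => 2 ^ p.1 := pow_primrec.comp (Primrec.const 2) Primrec.fst
  exact Primrec.nat_mul.comp (pow_primrec.comp h4 h1)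
    (Primrec.nat_mul.comp (pow_primrec.comp h3 h2) h3)

theorem bD_primrec : Primrec fun p : ℕ × ℕ => bD p.1 p.2 := by
  unfold bD
  have h1 : Primrec fun p : ℕ × ℕ => bN p.1 p.2 * 2 + 1 :=
    Primrec.succ.comp (Primrec.nat_mul.comp bN_primrec (Primrec.const 2))
  have h2 : Primrec fun p : ℕ × ℕ => bN p.1 p.2 * (2 * p.2) + 1 :=
    Primrec.succ.comp (Primrec.nat_mul.comp bN_primrec
      (Primrec.nat_mul.comp (Primrec.const 2) Primrec.snd))
  exact Primrec.succ.comp (Primrec.nat_mul.comp h1 (pow_primrec.comp h2 bV_primrec))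

theorem bB_primrec : Primrec fun p : ℕ × ℕ => bB p.1 p.2 := by
  unfold bB
  exact pow_primrec.comp bD_primrec (Primrec.nat_mul.comp
    (pow_primrec.comp (pow_primrec.comp bD_primrec bD_primrec) Primrec.fst) bD_primrec)

theorem bL_primrec : Primrec fun p : ℕ × ℕ => bL p.1 p.2 := by
  unfold bL
  exact pow_primrec.comp (Primrec.succ.comp Primrec.fst)
    (Primrec.nat_add.comp bB_primrec bB_primrec)

end bounds

/-- The decision predicate in terms of explicit lists. -/
def check0 (a : ℕ × List ℕ) (Lg Lh Lv : List (List ℕ)) : Prop :=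
  ∀ g ∈ Lg, ∃ h ∈ Lh, ∀ v ∈ Lv, actLN a g v = actLN a h v

theorem check0_primrec : PrimrecPred fun p : (ℕ × List ℕ) × List (List ℕ) × List (List ℕ) ×
    List (List ℕ) => check0 p.1 p.2.1 p.2.2.1 p.2.2.2 := by
  have r1 : PrimrecRel fun (v : List ℕ) (b : (ℕ × List ℕ) × List ℕ × List ℕ) =>
      actLN b.1 b.2.1 v = actLN b.1 b.2.2 v := by
    refine Primrec.eq.comp ?_ ?_
    · exact actLN_primrec.comp (Primrec.pair (Primrec.fst.comp Primrec.snd) (Primrec.pair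
        (Primrec.fst.comp (Primrec.snd.comp Primrec.snd)) Primrec.fst))
    · exact actLN_primrec.comp (Primrec.pair (Primrec.fst.comp Primrec.snd) (Primrec.pair
        (Primrec.snd.comp (Primrec.snd.comp Primrec.snd)) Primrec.fst))
  have r1' := r1.forall_mem_list
  have r2 : PrimrecRel fun (h : List ℕ) (b : (ℕ × List ℕ) × List ℕ × List (List ℕ)) =>
      ∀ v ∈ b.2.2, actLN b.1 b.2.1 v = actLN b.1 h v := by
    exact r1'.comp (f := fun q : List ℕ × (ℕ × List ℕ) × List ℕ × List (List ℕ) => q.2.2.2)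
      (g := fun q => (q.2.1, q.2.2.1, q.1))
      (Primrec.snd.comp (Primrec.snd.comp Primrec.snd))
      (Primrec.pair (Primrec.fst.comp Primrec.snd) (Primrec.pair
        (Primrec.fst.comp (Primrec.snd.comp Primrec.snd)) Primrec.fst))
  have r2' := r2.exists_mem_list
  have r3 : PrimrecRel fun (g : List ℕ) (b : (ℕ × List ℕ) × List (List ℕ) × List (List ℕ)) =>
      ∃ h ∈ b.2.1, ∀ v ∈ b.2.2, actLN b.1 g v = actLN b.1 h v := by
    exact r2'.comp (f := fun q : List ℕ × (ℕ × List ℕ) × List (List ℕ) × List (List ℕ) => q.2.2.1)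
      (g := fun q => (q.2.1, q.1, q.2.2.2))
      (Primrec.fst.comp (Primrec.snd.comp Primrec.snd))
      (Primrec.pair (Primrec.fst.comp Primrec.snd) (Primrec.pair Primrec.fst
        (Primrec.snd.comp (Primrec.snd.comp Primrec.snd))))
  have r3' := r3.forall_mem_list
  exact r3'.comp (f := fun q : (ℕ × List ℕ) × List (List ℕ) × List (List ℕ) × List (List ℕ) =>
      q.2.1) (g := fun q => (q.1, q.2.2.1, q.2.2.2))
    (Primrec.fst.comp Primrec.snd)
    (Primrec.pair Primrec.fst (Primrec.pair (Primrec.fst.comp (Primrec.snd.comp Primrec.snd))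
      (Primrec.snd.comp (Primrec.snd.comp Primrec.snd))))

/-- The decision predicate for parameters. -/
def check1 (n k : ℕ) (T : List ℕ) : Prop :=
  check0 (k, T) (wordsN n (Mealy.bB n k)) (shortN n (Mealy.bB n k)) (wordsN k (Mealy.bL n k))

theorem check1_primrec : PrimrecPred fun p : (ℕ × ℕ) × List ℕ => check1 p.1.1 p.1.2 p.2 := by
  unfold check1
  have hn : Primrec fun p : (ℕ × ℕ) × List ℕ => p.1.1 := Primrec.fst.comp Primrec.fst
  have hk : Primrec fun p : (ℕ × ℕ) × List ℕ => p.1.2 := Primrec.snd.comp Primrec.fst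
  have hB : Primrec fun p : (ℕ × ℕ) × List ℕ => Mealy.bB p.1.1 p.1.2 :=
    bB_primrec.comp Primrec.fst
  have hL : Primrec fun p : (ℕ × ℕ) × List ℕ => Mealy.bL p.1.1 p.1.2 :=
    bL_primrec.comp Primrec.fst
  exact check0_primrec.comp (f := fun p : (ℕ × ℕ) × List ℕ => ((p.1.2, p.2),
    wordsN p.1.1 (Mealy.bB p.1.1 p.1.2), shortN p.1.1 (Mealy.bB p.1.1 p.1.2),
    wordsN p.1.2 (Mealy.bL p.1.1 p.1.2)))
    (Primrec.pair (Primrec.pair hk Primrec.snd) (Primrec.pair (wordsN_primrec.comp hn hB)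
      (Primrec.pair (shortN_primrec.comp hn hB) (wordsN_primrec.comp hk hL))))

/-- The decision predicate on codes. -/
def check (c : ℕ) : Prop :=
  check1 c.unpair.1 c.unpair.2.unpair.1 (Denumerable.ofNat (List ℕ) c.unpair.2.unpair.2)

theorem check_primrec : PrimrecPred check := by
  have h1 : Primrec fun c : ℕ => c.unpair.1 := Primrec.fst.comp Primrec.unpair
  have h2 : Primrec fun c : ℕ => c.unpair.2.unpair :=
    Primrec.unpair.comp (Primrec.snd.comp Primrec.unpair)
  exact check1_primrec.comp (f := fun c : ℕ => ((c.unpair.1, c.unpair.2.unpair.1),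
    Denumerable.ofNat (List ℕ) c.unpair.2.unpair.2))
    (Primrec.pair (Primrec.pair h1 (Primrec.fst.comp h2))
      ((Primrec.ofNat (List ℕ)).comp (Primrec.snd.comp h2)))

theorem mem_wordsN (a r : ℕ) (w : List ℕ) :
    w ∈ wordsN a r ↔ w.length = r ∧ ∀ x ∈ w, x < a := by
  induction r generalizing w with
  | zero =>
    constructor
    · intro h
      have : w = [] := by simpa [wordsN] using h
      simp [this]
    · rintro ⟨h, -⟩
      have : w = [] := by simpa using h
      simp [this, wordsN]
  | succ r ih =>
    have e : wordsN a (r + 1) = (wordsN a r).flatMap fun w =>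
      (List.range a).map fun i => i :: w := rfl
    rw [e]
    simp only [List.mem_flatMap, List.mem_map, List.mem_range, ih]
    constructor
    · rintro ⟨u, ⟨h1, h2⟩, i, hi, rfl⟩
      simp [h1, hi]
      exact h2
    · rintro ⟨h1, h2⟩
      cases w with
      | nil => simp at h1
      | cons x w =>
        simp only [List.mem_cons, forall_eq_or_imp] at h2
        exact ⟨w, ⟨by simpa using h1, h2.2⟩, x, h2.1, rfl⟩

theorem mem_shortN (a r : ℕ) (w : List ℕ) :
    w ∈ shortN a r ↔ w.length < r ∧ ∀ x ∈ w, x < a := by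
  simp only [shortN, List.mem_flatMap, List.mem_range, mem_wordsN]
  constructor
  · rintro ⟨i, hi, rfl, h⟩
    exact ⟨hi, h⟩
  · rintro ⟨h1, h2⟩
    exact ⟨_, h1, rfl, h2⟩

/-- lifting a word of codes -/
theorem lift_word {a : ℕ} {w : List ℕ} (h : ∀ x ∈ w, x < a) :
    ∃ u : List (Fin a), u.map Fin.val = w := by
  induction w with
  | nil => exact ⟨[], rfl⟩
  | cons x w ih =>
    simp only [List.mem_cons, forall_eq_or_imp] at h
    obtain ⟨u, rfl⟩ := ih h.2
    exact ⟨⟨x, h.1⟩ :: u, rfl⟩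

/-- the table of an automaton -/
def tab (n k : ℕ) (step : Fin n → Fin k → Fin k × Fin n) : List ℕ :=
  (List.finRange n).flatMap fun s => (List.finRange k).map fun x =>
    Nat.pair ((step s x).1 : ℕ) ((step s x).2 : ℕ)

theorem getD_flatMap {α : Type} (k : ℕ) (f : α → List ℕ) (hf : ∀ a, (f a).length = k)
    (l : List α) : ∀ (i x : ℕ) (hi : i < l.length), x < k →
      (l.flatMap f).getD (i * k + x) 0 = (f l[i]).getD x 0 := by
  induction l with
  | nil => intro i x hi; simp at hi
  | cons b l ih =>
    intro i x hi hx
    rw [List.flatMap_cons]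
    cases i with
    | zero =>
      rw [List.getD_append _ _ _ _ (by rw [hf]; omega)]
      simp
    | succ i =>
      rw [List.getD_append_right _ _ _ _ (by rw [hf, Nat.succ_mul]; omega), hf]
      have : (i + 1) * k + x - k = i * k + x := by rw [Nat.succ_mul]; omega
      rw [this, ih i x (by simpa using hi) hx]
      simp

theorem stepN_tab {n k : ℕ} (step : Fin n → Fin k → Fin k × Fin n) (s : Fin n) (x : Fin k) :
    stepN (k, tab n k step) s x = (((step s x).1 : ℕ), ((step s x).2 : ℕ)) := by
  unfold stepN tab
  simp only
  rw [getD_flatMap k _ (by simp) _ _ _ (by simp) x.2]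
  rw [List.getD_eq_getElem _ _ (by simp)]
  simp

theorem foldl_tab {n k : ℕ} (step : Fin n → Fin k → Fin k × Fin n) (v : List (Fin k)) :
    ∀ (s : Fin n) (acc : List ℕ),
      ((v.map Fin.val).foldl (foldN (k, tab n k step)) (s, acc)).2 =
        acc ++ ((Mealy.mk step).act s v).map Fin.val := by
  induction v with
  | nil => intro s acc; simp [Mealy.act]
  | cons x v ih =>
    intro s acc
    rw [List.map_cons, List.foldl_cons]
    have : foldN (k, tab n k step) (s, acc) x =
        (((step s x).2 : ℕ), acc ++ [((step s x).1 : ℕ)]) := by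
      simp [foldN, stepN_tab]
    rw [this, ih]
    simp [Mealy.act]

theorem actN_tab {n k : ℕ} (step : Fin n → Fin k → Fin k × Fin n) (s : Fin n) (v : List (Fin k)) :
    actN (k, tab n k step) s (v.map Fin.val) = ((Mealy.mk step).act s v).map Fin.val := by
  unfold actN
  rw [foldl_tab]
  simp

theorem actLN_tab {n k : ℕ} (step : Fin n → Fin k → Fin k × Fin n) (g : List (Fin n))
    (v : List (Fin k)) : actLN (k, tab n k step) (g.map Fin.val) (v.map Fin.val) =
      ((Mealy.mk step).actL g v).map Fin.val := by
  induction g with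
  | nil => rfl
  | cons s g ih =>
    have : actLN (k, tab n k step) ((s :: g).map Fin.val) (v.map Fin.val) =
      actN (k, tab n k step) s (actLN (k, tab n k step) (g.map Fin.val) (v.map Fin.val)) := rfl
    rw [this, ih, actN_tab]
    rfl

theorem check_iff {n k : ℕ} (step : Fin n → Fin k → Fin k × Fin n) :
    check (encodeAut n k step) ↔
      ∀ g : List (Fin n), g.length = Mealy.bB n k →
        ∃ h : List (Fin n), h.length < Mealy.bB n k ∧
          ∀ v : List (Fin k), v.length = Mealy.bL n k →
            (Mealy.mk step).actL g v = (Mealy.mk step).actL h v := by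
  have e : check (encodeAut n k step) ↔ check1 n k (tab n k step) := by
    have : encodeAut n k step = Nat.pair n (Nat.pair k (Encodable.encode (tab n k step))) := rfl
    rw [this]
    simp [check]
  have hinj : Function.Injective (List.map (Fin.val : Fin k → ℕ)) :=
    List.map_injective_iff.2 Fin.val_injective
  rw [e]
  unfold check1 check0
  constructor
  · intro H g hg
    obtain ⟨h, hh, hv⟩ := H (g.map Fin.val) ((mem_wordsN _ _ _).2 ⟨by simpa using hg, by simp⟩)
    obtain ⟨h1, h2⟩ := (mem_shortN _ _ _).1 hh
    obtain ⟨h, rfl⟩ := lift_word h2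
    refine ⟨h, by simpa using h1, fun v hvl => hinj ?_⟩
    rw [← actLN_tab, ← actLN_tab]
    exact hv _ ((mem_wordsN _ _ _).2 ⟨by simpa using hvl, by simp⟩)
  · intro H g hg
    obtain ⟨h1, h2⟩ := (mem_wordsN _ _ _).1 hg
    obtain ⟨g, rfl⟩ := lift_word h2
    obtain ⟨h, hh, hv⟩ := H g (by simpa using h1)
    refine ⟨h.map Fin.val, (mem_shortN _ _ _).2 ⟨by simpa using hh, by simp⟩, fun v hvm => ?_⟩
    obtain ⟨k1, k2⟩ := (mem_wordsN _ _ _).1 hvm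
    obtain ⟨v, rfl⟩ := lift_word k2
    rw [actLN_tab, actLN_tab, hv v (by simpa using k1)]

end MealyComp

/-- The finiteness problem for groups generated by bounded invertible
Mealy automata is decidable. -/
theorem finiteness_problem_decidable :
    ∃ F : ℕ → Bool, Computable F ∧
      ∀ (n k : ℕ) (step : Fin n → Fin k → Fin k × Fin n),
        2 ≤ k → (Mealy.mk step).Invertible → (Mealy.mk step).Bounded →
          (F (encodeAut n k step) = true ↔ Finite (Mealy.mk step).autGroup) := by

  classical
  refine ⟨fun c => decide (MealyComp.check c), ?_, ?_⟩
  · exact (Primrec.to_comp MealyComp.check_primrec.decide)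
  · intro n k step hk hA hB
    haveI : Nonempty (Fin k) := ⟨⟨0, by omega⟩⟩
    rw [decide_eq_true_iff, MealyComp.check_iff, Mealy.finite_iff_check hA hB]
    simp only [Fintype.card_fin]
end

section
/- For every bounded invertible Mealy automaton A over X there exist a finite set Q, a transition function δ : Q × X → Q, an initial state q₀ ∈ Q, and a set F ⊆ Q of accepting states, such that for every right-infinite sequence w = w₁w₂w₃… ∈ X^ω the following holds: the orbit of w under G_A is finite if and only if the run of the machine on w (the sequence of states q₀, δ(q₀, w₁), δ(δ(q₀, w₁), w₂), …) visits accepting states only finitely often. -/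
namespace OrbAcc

open Mealy Pointwise

variable {S X : Type*}

theorem act_length (A : Mealy S X) (v : List X) : ∀ s, (A.act s v).length = v.length := by
  induction v with
  | nil => intro s; rfl
  | cons x v ih => intro s; simp [Mealy.act, ih]

theorem act_append (A : Mealy S X) (u z : List X) :
    ∀ s, A.act s (u ++ z) = A.act s u ++ A.act (A.sec s u) z := by
  induction u with
  | nil => intro s; rfl
  | cons x v ih => intro s; simp [Mealy.act, Mealy.sec, ih]

theorem sec_append (A : Mealy S X) (u z : List X) :
    ∀ s, A.sec s (u ++ z) = A.sec (A.sec s u) z := by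
  induction u with
  | nil => intro s; rfl
  | cons x v ih => intro s; simp [Mealy.sec, ih]

theorem act_inj (A : Mealy S X) (hInv : A.Invertible) (u : List X) :
    ∀ s v, A.act s u = A.act s v → u = v := by
  induction u with
  | nil =>
    intro s v h
    cases v with
    | nil => rfl
    | cons y v => simp [Mealy.act] at h
  | cons x u ih =>
    intro s v h
    cases v with
    | nil => simp [Mealy.act] at h
    | cons y v =>
      simp only [Mealy.act, List.cons.injEq] at h
      have hxy : x = y := (hInv s).1 h.1
      subst hxy
      rw [ih _ _ h.2]

theorem act_surj (A : Mealy S X) (hInv : A.Invertible) (u : List X) :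
    ∀ s, ∃ v, A.act s v = u := by
  induction u with
  | nil => intro s; exact ⟨[], rfl⟩
  | cons x u ih =>
    intro s
    obtain ⟨y, hy⟩ := (hInv s).2 x
    obtain ⟨v, hv⟩ := ih (A.step s y).2
    refine ⟨y :: v, ?_⟩
    simp only at hy
    simp [Mealy.act, hv, hy]

/-- The permutation defined by a state. -/
noncomputable def perm (A : Mealy S X) (hInv : A.Invertible) (s : S) : Equiv.Perm (List X) :=
  Equiv.ofBijective (A.act s) ⟨fun u v h => act_inj A hInv u s v h, fun u => act_surj A hInv u s⟩

theorem perm_apply (A : Mealy S X) (hInv : A.Invertible) (s : S) (u : List X) :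
    perm A hInv s u = A.act s u := rfl

theorem perm_append (A : Mealy S X) (hInv : A.Invertible) (s : S) (u z : List X) :
    perm A hInv s (u ++ z) = perm A hInv s u ++ perm A hInv (A.sec s u) z :=
  act_append A u z s

theorem perm_mem (A : Mealy S X) (hInv : A.Invertible) (s : S) : perm A hInv s ∈ A.autGroup :=
  Subgroup.subset_closure ⟨s, fun _ => rfl⟩

theorem G_ind (A : Mealy S X) (hInv : A.Invertible) (p : Equiv.Perm (List X) → Prop)
    (hg : ∀ s, p (perm A hInv s)) (h1 : p 1)
    (hm : ∀ g₁ ∈ A.autGroup, ∀ g₂ ∈ A.autGroup, p g₁ → p g₂ → p (g₁ * g₂))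
    (hi : ∀ g ∈ A.autGroup, p g → p g⁻¹) : ∀ g ∈ A.autGroup, p g := by
  intro g hgm
  refine Subgroup.closure_induction (p := fun g _ => p g) ?_ h1 ?_ ?_ hgm
  · rintro f ⟨s, hs⟩
    have : f = perm A hInv s := Equiv.ext hs
    rw [this]; exact hg s
  · intro a b ha hb; exact hm a ha b hb
  · intro a ha; exact hi a ha

theorem G_length (A : Mealy S X) (hInv : A.Invertible) :
    ∀ g ∈ A.autGroup, ∀ u : List X, (g u).length = u.length := by
  refine G_ind A hInv _ ?_ ?_ ?_ ?_
  · intro s u; exact act_length A u s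
  · intro u; rfl
  · intro g₁ _ g₂ _ h₁ h₂ u; simp [h₁, h₂]
  · intro g _ h u
    have := h (g⁻¹ u)
    simpa using this.symm

theorem G_sec (A : Mealy S X) (hInv : A.Invertible) :
    ∀ g ∈ A.autGroup, ∀ u : List X, ∃ h : Equiv.Perm (List X), ∀ z, g (u ++ z) = g u ++ h z := by
  refine G_ind A hInv _ ?_ ?_ ?_ ?_
  · intro s u; exact ⟨_, perm_append A hInv s u⟩
  · intro u; exact ⟨1, fun z => rfl⟩
  · intro g₁ _ g₂ _ h₁ h₂ u
    obtain ⟨k₂, hk₂⟩ := h₂ u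
    obtain ⟨k₁, hk₁⟩ := h₁ (g₂ u)
    exact ⟨k₁ * k₂, fun z => by simp [hk₁, hk₂]⟩
  · intro g _ h u
    obtain ⟨k, hk⟩ := h (g⁻¹ u)
    refine ⟨k⁻¹, fun z => ?_⟩
    rw [Equiv.Perm.inv_eq_iff_eq, hk]
    simp

/-- The group of sections at `v` of the stabilizer of `v`. -/
def H (A : Mealy S X) (v : List X) : Subgroup (Equiv.Perm (List X)) where
  carrier := {h | ∃ g ∈ A.autGroup, ∀ z, g (v ++ z) = v ++ h z}
  one_mem' := ⟨1, one_mem _, fun z => rfl⟩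
  mul_mem' := by
    rintro a b ⟨g, hg, h⟩ ⟨g', hg', h'⟩
    exact ⟨g * g', mul_mem hg hg', fun z => by simp [h, h']⟩
  inv_mem' := by
    rintro a ⟨g, hg, h⟩
    refine ⟨g⁻¹, inv_mem hg, fun z => ?_⟩
    rw [Equiv.Perm.inv_eq_iff_eq, h]
    simp

theorem mem_H (A : Mealy S X) (v : List X) (h : Equiv.Perm (List X)) :
    h ∈ H A v ↔ ∃ g ∈ A.autGroup, ∀ z, g (v ++ z) = v ++ h z := Iff.rfl

theorem H_step (A : Mealy S X) (hInv : A.Invertible) (v : List X) (x : X)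
    (h : Equiv.Perm (List X)) :
    h ∈ H A (v ++ [x]) ↔ ∃ h' ∈ H A v, ∀ z, h' (x :: z) = x :: h z := by
  constructor
  · rintro ⟨g, hg, hh⟩
    obtain ⟨k, hk⟩ := G_sec A hInv g hg v
    have e : ∀ z, g v ++ k (x :: z) = v ++ (x :: h z) := by
      intro z
      rw [← hk]
      simpa using hh z
    have e2 := fun z => List.append_inj (e z) (G_length A hInv g hg v)
    refine ⟨k, ⟨g, hg, fun z => ?_⟩, fun z => (e2 z).2⟩
    rw [hk, (e2 []).1]
  · rintro ⟨k, ⟨g, hg, hk⟩, h'⟩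
    refine ⟨g, hg, fun z => ?_⟩
    have := hk (x :: z)
    rw [h'] at this
    simpa using this

theorem H_moves (A : Mealy S X) (hInv : A.Invertible) (v : List X) (x : X) :
    (∃ h ∈ H A v, h [x] ≠ [x]) ↔ ∃ g ∈ A.autGroup, g v = v ∧ g (v ++ [x]) ≠ v ++ [x] := by
  constructor
  · rintro ⟨h, ⟨g, hg, hh⟩, hx⟩
    refine ⟨g, hg, ?_, ?_⟩
    · have := hh []
      rw [List.append_nil] at this
      exact (List.append_inj (this.trans rfl |> fun t => (by simpa using t : g v ++ [] = v ++ h []))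
        (G_length A hInv g hg v)).1
    · rw [hh]; simpa using hx
  · rintro ⟨g, hg, hv, hx⟩
    obtain ⟨k, hk⟩ := G_sec A hInv g hg v
    rw [hv] at hk
    refine ⟨k, ⟨g, hg, hk⟩, ?_⟩
    rw [hk] at hx
    simpa using hx

/-! ### Labelled paths in the Schreier graph -/

/-- Labelled paths from `v`, counting only the edges that need not be trivial. -/
inductive LP (A : Mealy S X) (hInv : A.Invertible) (v : List X) :
    ℕ → List X → Equiv.Perm (List X) → Prop
  | base : LP A hInv v 0 v 1
  | weak (k u h) : LP A hInv v k u h → LP A hInv v (k + 1) u h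
  | tF (k u h s) : A.IsTrivialState (A.sec s u) → LP A hInv v k u h →
      LP A hInv v k (perm A hInv s u) h
  | tB (k u h s) : A.IsTrivialState (A.sec s u) → LP A hInv v k (perm A hInv s u) h →
      LP A hInv v k u h
  | F (k u h s) : LP A hInv v k u h →
      LP A hInv v (k + 1) (perm A hInv s u) (perm A hInv (A.sec s u) * h)
  | B (k u h s) : LP A hInv v k (perm A hInv s u) h →
      LP A hInv v (k + 1) u ((perm A hInv (A.sec s u))⁻¹ * h)

theorem perm_triv (A : Mealy S X) (hInv : A.Invertible) (s : S) (h : A.IsTrivialState s) :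
    perm A hInv s = 1 := Equiv.ext h

theorem inv_append (A : Mealy S X) (hInv : A.Invertible) (s : S) (u z : List X) :
    (perm A hInv s)⁻¹ (perm A hInv s u ++ z) = u ++ (perm A hInv (A.sec s u))⁻¹ z := by
  rw [Equiv.Perm.inv_eq_iff_eq, perm_append]
  simp

theorem LP_elem (A : Mealy S X) (hInv : A.Invertible) (v : List X) (k u h)
    (hp : LP A hInv v k u h) :
    ∃ g ∈ A.autGroup, g v = u ∧ ∀ z, g (v ++ z) = u ++ h z := by
  induction hp with
  | base => exact ⟨1, one_mem _, rfl, fun z => rfl⟩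
  | weak k u h _ ih => exact ih
  | tF k u h s ht _ ih =>
    obtain ⟨g, hg, h1, h2⟩ := ih
    refine ⟨perm A hInv s * g, mul_mem (perm_mem A hInv s) hg, by simp [h1], fun z => ?_⟩
    rw [Equiv.Perm.mul_apply, h2, perm_append, perm_triv A hInv _ ht]
    rfl
  | tB k u h s ht _ ih =>
    obtain ⟨g, hg, h1, h2⟩ := ih
    refine ⟨(perm A hInv s)⁻¹ * g, mul_mem (inv_mem (perm_mem A hInv s)) hg, by simp [h1],
      fun z => ?_⟩
    rw [Equiv.Perm.mul_apply, h2, inv_append, perm_triv A hInv _ ht]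
    rfl
  | F k u h s _ ih =>
    obtain ⟨g, hg, h1, h2⟩ := ih
    refine ⟨perm A hInv s * g, mul_mem (perm_mem A hInv s) hg, by simp [h1], fun z => ?_⟩
    rw [Equiv.Perm.mul_apply, h2, perm_append]
    rfl
  | B k u h s _ ih =>
    obtain ⟨g, hg, h1, h2⟩ := ih
    refine ⟨(perm A hInv s)⁻¹ * g, mul_mem (inv_mem (perm_mem A hInv s)) hg, by simp [h1],
      fun z => ?_⟩
    rw [Equiv.Perm.mul_apply, h2, inv_append]
    rfl

/-- The symmetric finite generating set. -/
def Gam (A : Mealy S X) (hInv : A.Invertible) : Set (Equiv.Perm (List X)) :=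
  {1} ∪ (Set.range (perm A hInv) ∪ (Set.range (perm A hInv))⁻¹)

theorem Gam_finite [Finite S] (A : Mealy S X) (hInv : A.Invertible) : (Gam A hInv).Finite :=
  (Set.finite_singleton _).union ((Set.finite_range _).union (Set.finite_range _).inv)

theorem Gam_one (A : Mealy S X) (hInv : A.Invertible) : 1 ∈ Gam A hInv := Or.inl rfl

theorem Gam_pow_finite [Finite S] (A : Mealy S X) (hInv : A.Invertible) (k : ℕ) :
    (Gam A hInv ^ k).Finite := by
  induction k with
  | zero => rw [pow_zero]; exact Set.finite_one
  | succ k ih => rw [pow_succ]; exact ih.mul (Gam_finite A hInv)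

theorem Gam_inv (A : Mealy S X) (hInv : A.Invertible) : (Gam A hInv)⁻¹ = Gam A hInv := by
  unfold Gam
  rw [Set.union_inv, Set.union_inv, inv_inv, Set.union_comm (Set.range _)⁻¹]
  simp

theorem Gam_pow_inv (A : Mealy S X) (hInv : A.Invertible) (k : ℕ) (t) (ht : t ∈ Gam A hInv ^ k) :
    t⁻¹ ∈ Gam A hInv ^ k := by
  rw [← Set.mem_inv, ← inv_pow, Gam_inv]
  exact ht

theorem LP_Gam (A : Mealy S X) (hInv : A.Invertible) (v : List X) (k u h)
    (hp : LP A hInv v k u h) : h ∈ Gam A hInv ^ k := by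
  induction hp with
  | base => simp
  | weak k u h _ ih => exact Set.pow_subset_pow_right (Gam_one A hInv) (Nat.le_succ k) ih
  | tF k u h s ht _ ih => exact ih
  | tB k u h s ht _ ih => exact ih
  | F k u h s _ ih =>
    rw [pow_succ']
    exact Set.mul_mem_mul (Or.inr (Or.inl ⟨_, rfl⟩)) ih
  | B k u h s _ ih =>
    rw [pow_succ']
    exact Set.mul_mem_mul (Or.inr (Or.inr (by simp))) ih

/-- words reachable with at most `k` non-trivial edges -/
def T (A : Mealy S X) (hInv : A.Invertible) (v : List X) (k : ℕ) : Set (List X) :=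
  {u | ∃ h, LP A hInv v k u h}

theorem T_mono (A : Mealy S X) (hInv : A.Invertible) (v : List X) : Monotone (T A hInv v) :=
  monotone_nat_of_le_succ fun k u ⟨h, hh⟩ => ⟨h, .weak k u h hh⟩

/-- the nontrivial edges of level `n` -/
def E (A : Mealy S X) (n : ℕ) : Set (S × List X) :=
  {e | e.2.length = n ∧ ¬ A.IsTrivialState (A.sec e.1 e.2)}

/-- closed under edges -/
def Cl (A : Mealy S X) (hInv : A.Invertible) (V : Set (List X)) : Prop :=
  ∀ s u, u ∈ V ↔ perm A hInv s u ∈ V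

theorem T_length (A : Mealy S X) (hInv : A.Invertible) (v : List X) (k u)
    (hu : u ∈ T A hInv v k) : u.length = v.length := by
  obtain ⟨h, hh⟩ := hu
  obtain ⟨g, hg, h1, _⟩ := LP_elem A hInv v k u h hh
  rw [← h1]; exact G_length A hInv g hg v

theorem T_closed (A : Mealy S X) (hInv : A.Invertible) (v : List X) (N : ℕ)
    (hE : (E A v.length).Finite) (hN : (E A v.length).ncard ≤ N) :
    ∃ j ≤ N + 1, Cl A hInv (T A hInv v j) := by
  by_contra hcon
  push Not at hcon
  let D : ℕ → Set (S × List X) := fun k =>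
    E A v.length ∩ {e | e.2 ∈ T A hInv v k ∧ perm A hInv e.1 e.2 ∈ T A hInv v k}
  have hD : ∀ k, k ≤ N + 1 → k ≤ (D k).ncard := by
    intro k
    induction k with
    | zero => intro _; exact Nat.zero_le _
    | succ k ih =>
      intro hk
      have h1 := ih (by omega)
      refine lt_of_le_of_lt h1 (Set.ncard_lt_ncard ?_ (hE.subset Set.inter_subset_left))
      have hm := T_mono A hInv v (Nat.le_succ k)
      have hsub : D k ⊆ D (k + 1) := fun e he => ⟨he.1, hm he.2.1, hm he.2.2⟩
      refine (Set.ssubset_iff_of_subset hsub).2 ?_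
      have hn := hcon k (by omega)
      unfold Cl at hn
      push Not at hn
      obtain ⟨s, u, ⟨⟨h, hu⟩, hu'⟩ | ⟨hu', ⟨h, hu⟩⟩⟩ := hn
      · have hnt : ¬ A.IsTrivialState (A.sec s u) := fun ht => hu' ⟨h, .tF k u h s ht hu⟩
        exact ⟨(s, u), ⟨⟨T_length A hInv v k u ⟨h, hu⟩, hnt⟩, hm ⟨h, hu⟩, ⟨_, .F k u h s hu⟩⟩,
          fun hd => hu' hd.2.2⟩
      · have hnt : ¬ A.IsTrivialState (A.sec s u) := fun ht => hu' ⟨h, .tB k u h s ht hu⟩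
        have hT : u ∈ T A hInv v (k + 1) := ⟨_, .B k u h s hu⟩
        exact ⟨(s, u), ⟨⟨T_length A hInv v (k + 1) u hT, hnt⟩, hT, hm ⟨h, hu⟩⟩,
          fun hd => hu' hd.2.1⟩
  have h1 := hD (N + 1) le_rfl
  have h2 : (D (N + 1)).ncard ≤ (E A v.length).ncard :=
    Set.ncard_le_ncard Set.inter_subset_left hE
  omega

theorem T_orbit (A : Mealy S X) (hInv : A.Invertible) (v : List X) (N : ℕ)
    (hE : (E A v.length).Finite) (hN : (E A v.length).ncard ≤ N) :
    ∀ g ∈ A.autGroup, g v ∈ T A hInv v (N + 1) := by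
  obtain ⟨j, hj, hcl⟩ := T_closed A hInv v N hE hN
  have key : ∀ g ∈ A.autGroup, ∀ u, u ∈ T A hInv v j ↔ g u ∈ T A hInv v j := by
    refine G_ind A hInv _ ?_ ?_ ?_ ?_
    · exact hcl
    · intro u; rfl
    · intro g₁ _ g₂ _ h₁ h₂ u
      rw [h₂, h₁]; rfl
    · intro g _ h u
      rw [h (g⁻¹ u)]; simp
  intro g hg
  refine T_mono A hInv v hj ((key g hg v).1 ?_)
  exact T_mono A hInv v (Nat.zero_le j) ⟨1, .base⟩

theorem LP_le (A : Mealy S X) (hInv : A.Invertible) (v : List X) (u h) (k : ℕ)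
    (hp : LP A hInv v 0 u h) : LP A hInv v k u h := by
  induction k with
  | zero => exact hp
  | succ k ih => exact .weak k u h ih

theorem H_gen (A : Mealy S X) (hInv : A.Invertible) (v : List X) (M : ℕ)
    (hM : ∀ g ∈ A.autGroup, g v ∈ T A hInv v M) :
    H A v = Subgroup.closure ((H A v : Set _) ∩ Gam A hInv ^ (M + 1 + M)) := by
  set K := Subgroup.closure ((H A v : Set _) ∩ Gam A hInv ^ (M + 1 + M)) with hK
  apply le_antisymm
  swap
  · rw [hK, Subgroup.closure_le]; exact Set.inter_subset_left
  -- short elements are in K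
  have short : ∀ g ∈ A.autGroup, ∀ u t t' h, LP A hInv v M u t → LP A hInv v M (g u) t' →
      (∀ z, g (u ++ z) = g u ++ h z) → h ∈ Gam A hInv → t'⁻¹ * h * t ∈ K := by
    intro g hg u t t' h ht ht' hh hG
    refine Subgroup.subset_closure ⟨?_, ?_⟩
    · obtain ⟨a, ha, _, ha2⟩ := LP_elem A hInv v M u t ht
      obtain ⟨b, hb, _, hb2⟩ := LP_elem A hInv v M _ t' ht'
      refine ⟨b⁻¹ * g * a, mul_mem (mul_mem (inv_mem hb) hg) ha, fun z => ?_⟩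
      rw [Equiv.Perm.mul_apply, Equiv.Perm.mul_apply, Equiv.Perm.inv_eq_iff_eq, hb2, ha2, hh]
      simp
    · rw [pow_add, pow_succ]
      exact Set.mul_mem_mul (Set.mul_mem_mul
        (Gam_pow_inv A hInv M _ (LP_Gam A hInv v M _ _ ht')) hG) (LP_Gam A hInv v M _ _ ht)
  have main : ∀ g ∈ A.autGroup, ∀ u t t' h, LP A hInv v M u t → LP A hInv v M (g u) t' →
      (∀ z, g (u ++ z) = g u ++ h z) → t'⁻¹ * h * t ∈ K := by
    refine G_ind A hInv _ ?_ ?_ ?_ ?_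
    · intro s u t t' h ht ht' hh
      refine short _ (perm_mem A hInv s) u t t' h ht ht' hh ?_
      have : h = perm A hInv (A.sec s u) := by
        ext1 z
        have := hh z
        rw [perm_append] at this
        exact (List.append_cancel_left this).symm
      rw [this]
      exact Or.inr (Or.inl ⟨_, rfl⟩)
    · intro u t t' h ht ht' hh
      refine short 1 (one_mem _) u t t' h ht ht' hh ?_
      have : h = 1 := by
        ext1 z
        have := hh z
        exact (List.append_cancel_left this).symm
      rw [this]
      exact Gam_one A hInv
    · intro g₁ hg₁ g₂ hg₂ h₁ h₂ u t t' h ht ht' hh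
      obtain ⟨k₂, hk₂⟩ := G_sec A hInv g₂ hg₂ u
      obtain ⟨k₁, hk₁⟩ := G_sec A hInv g₁ hg₁ (g₂ u)
      have hk : h = k₁ * k₂ := by
        ext1 z
        have := hh z
        rw [Equiv.Perm.mul_apply, hk₂, hk₁] at this
        exact (List.append_cancel_left this).symm
      obtain ⟨a, ha, ha1, _⟩ := LP_elem A hInv v M u t ht
      obtain ⟨t₂, ht₂⟩ := hM (g₂ * a) (mul_mem hg₂ ha)
      rw [Equiv.Perm.mul_apply, ha1] at ht₂
      have e1 := h₁ (g₂ u) t₂ t' k₁ ht₂ ht' hk₁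
      have e2 := h₂ u t t₂ k₂ ht ht₂ hk₂
      have := mul_mem e1 e2
      have e3 : t'⁻¹ * h * t = t'⁻¹ * k₁ * t₂ * (t₂⁻¹ * k₂ * t) := by rw [hk]; group
      rw [e3]; exact this
    · intro g hg ih u t t' h ht ht' hh
      have := ih (g⁻¹ u) t' t h⁻¹ ht' (by simpa using ht) (fun z => by
        have := hh (h⁻¹ z)
        rw [Equiv.Perm.inv_eq_iff_eq] at this
        simpa using this.symm)
      have e := inv_mem this
      have e3 : t'⁻¹ * h * t = (t⁻¹ * h⁻¹ * t')⁻¹ := by group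
      rw [e3]; exact e
  rintro h ⟨g, hg, hh⟩
  have hv : g v = v := by
    have := hh []
    exact (List.append_inj (by simpa using this : g v ++ [] = v ++ h [])
        (G_length A hInv g hg v)).1
  have hb : LP A hInv v M v 1 := LP_le A hInv v v 1 M .base
  have := main g hg v 1 1 h hb (by rw [hv]; exact hb) (by rw [hv]; exact hh)
  simpa using this

/-! ### Counting nontrivial edges -/

/-- states with incoming paths of length `k` -/
def R (A : Mealy S X) (k : ℕ) : Set S := {t | ∃ s u, u.length = k ∧ A.sec s u = t}

theorem R_anti (A : Mealy S X) : Antitone (R A) := by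
  refine antitone_nat_of_succ_le fun k => ?_
  rintro t ⟨s, u, hu, ht⟩
  cases u with
  | nil => simp at hu
  | cons x u => exact ⟨(A.step s x).2, u, by simpa using hu, ht⟩

theorem R_stable [Finite S] (A : Mealy S X) : ∃ K, R A K = R A (K + 1) := by
  obtain ⟨K, hK⟩ := WellFoundedLT.antitone_chain_condition (R_anti A)
  exact ⟨K, hK (K + 1) (Nat.le_succ K)⟩

theorem R_pred (A : Mealy S X) (K : ℕ) (hK : R A K = R A (K + 1)) (t : S) (ht : t ∈ R A K) :
    ∃ s ∈ R A K, ∃ x y, A.step s x = (y, t) := by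
  rw [hK] at ht
  obtain ⟨s, u, hu, ht⟩ := ht
  obtain rfl | ⟨u', x, rfl⟩ := List.eq_nil_or_concat u
  · simp at hu
  · refine ⟨A.sec s u', ⟨s, u', by simpa using hu, rfl⟩, x, (A.step (A.sec s u') x).1, ?_⟩
    rw [List.concat_eq_append, sec_append] at ht
    rw [← ht]; rfl

theorem R_path (A : Mealy S X) (K : ℕ) (hK : R A K = R A (K + 1)) (t : S) (ht : t ∈ R A K) :
    ∃ (σ : ℕ → S) (inp out : ℕ → X), (∀ n, A.step (σ (n + 1)) (inp n) = (out n, σ n)) ∧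
      σ 0 = t := by
  choose! pr hpr xi yo hs using R_pred A K hK
  have hmem : ∀ n, pr^[n] t ∈ R A K := by
    intro n
    induction n with
    | zero => exact ht
    | succ n ih => rw [Function.iterate_succ_apply']; exact hpr _ ih
  refine ⟨fun n => pr^[n] t, fun n => xi (pr^[n] t) (hmem n), fun n => yo (pr^[n] t) (hmem n), fun n => ?_, rfl⟩
  simp only [Function.iterate_succ_apply']
  exact hs _ (hmem n)

theorem lsuffix_cons (p : ℕ → X) (n : ℕ) :
    lsuffix p (n + 1) = lsuffix (fun k => p (k + 1)) n ++ [p 0] := by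
  simp only [lsuffix, List.range_succ_eq_map]
  simp [Function.comp_def]

theorem R_path_word (A : Mealy S X) (K : ℕ) (hK : R A K = R A (K + 1)) (t : S) (ht : t ∈ R A K)
    (u : List X) :
    ∃ (σ : ℕ → S) (inp out : ℕ → X), (∀ n, A.step (σ (n + 1)) (inp n) = (out n, σ n)) ∧
      σ 0 = A.sec t u ∧ u = lsuffix inp u.length := by
  induction u using List.reverseRecOn with
  | nil =>
    obtain ⟨σ, inp, out, h1, h2⟩ := R_path A K hK t ht
    exact ⟨σ, inp, out, h1, h2, rfl⟩
  | append_singleton u x ih =>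
    obtain ⟨σ, inp, out, h1, h2, h3⟩ := ih
    refine ⟨fun n => Nat.casesOn n (A.sec t (u ++ [x])) σ, fun n => Nat.casesOn n x inp,
      fun n => Nat.casesOn n (A.step (A.sec t u) x).1 out, ?_, rfl, ?_⟩
    · intro n
      cases n with
      | zero => simp only [h2, sec_append]; rfl
      | succ n => exact h1 n
    · rw [List.length_append, List.length_singleton, lsuffix_cons]
      exact congrArg (· ++ [x]) h3

theorem E_bound [Finite S] [Finite X] [Nonempty X] (A : Mealy S X) (hB : A.Bounded) :
    ∃ N, ∀ n, (E A n).Finite ∧ (E A n).ncard ≤ N := by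
  obtain ⟨K, hK⟩ := R_stable A
  obtain ⟨x0⟩ := ‹Nonempty X›
  let P : Set (ℕ → X) := insert (fun _ => x0) A.PostCriticalSet
  let C : Set (S × List X × (ℕ → X)) := Set.univ ×ˢ ({u | u.length ≤ K} ×ˢ P)
  have hC : C.Finite := Set.finite_univ.prod
    ((List.finite_length_le X K).prod (Set.Finite.insert _ hB))
  refine ⟨C.ncard, fun n => ?_⟩
  let f : S × List X × (ℕ → X) → S × List X := fun c => (c.1, c.2.1 ++ lsuffix c.2.2 (n - K))
  have hsub : E A n ⊆ Set.image f C := by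
    rintro ⟨s, u⟩ ⟨hu, hnt⟩
    simp only at hu hnt
    rcases le_total n K with h | h
    · refine ⟨(s, u, fun _ => x0), ⟨trivial, ?_, Or.inl rfl⟩, ?_⟩
      · simp [hu, h]
      · simp [f, Nat.sub_eq_zero_of_le h, lsuffix]
    · have e := List.take_append_drop K u
      have ht : A.sec s (u.take K) ∈ R A K := ⟨s, _, by simp [hu, h], rfl⟩
      obtain ⟨σ, inp, out, h1, h2, h3⟩ := R_path_word A K hK _ ht (u.drop K)
      rw [← sec_append, e] at h2
      refine ⟨(s, u.take K, inp), ⟨trivial, ?_, Or.inr ?_⟩, ?_⟩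
      · simp
      · exact ⟨σ, inp, out, h1, by rw [h2]; exact hnt, Or.inl rfl⟩
      · simp only [f, Prod.mk.injEq, true_and]
        rw [List.length_drop, hu] at h3
        rw [← h3, e]
  exact ⟨(hC.image f).subset hsub,
    (Set.ncard_le_ncard hsub (hC.image f)).trans (Set.ncard_image_le hC)⟩

theorem H_finite [Finite S] [Finite X] [Nonempty X] (A : Mealy S X) (hInv : A.Invertible)
    (hB : A.Bounded) : (Set.range (H A)).Finite := by
  obtain ⟨N, hN⟩ := E_bound A hB
  have hfin := (Gam_pow_finite A hInv (N + 1 + 1 + (N + 1))).finite_subsets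
  refine (hfin.image (fun s => Subgroup.closure s)).subset ?_
  rintro _ ⟨v, rfl⟩
  refine ⟨(H A v : Set _) ∩ Gam A hInv ^ (N + 1 + 1 + (N + 1)), Set.inter_subset_right, ?_⟩
  exact (H_gen A hInv v (N + 1) (T_orbit A hInv v N (hN _).1 (hN _).2)).symm

/-! ### Infinite words -/

/-- prefix of length `n` -/
def pre (w : ℕ → X) (n : ℕ) : List X := (List.range n).map w

theorem pre_succ (w : ℕ → X) (n : ℕ) : pre w (n + 1) = pre w n ++ [w n] := by
  simp [pre, List.range_succ]

theorem pre_length (w : ℕ → X) (n : ℕ) : (pre w n).length = n := by simp [pre]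

theorem pre_ext (w w' : ℕ → X) (h : ∀ n, pre w n = pre w' n) : w = w' := by
  funext n
  have h1 := h (n + 1)
  rw [pre_succ, pre_succ, h n] at h1
  simpa using h1

theorem pre_extOmega (A : Mealy S X) (hInv : A.Invertible) (g) (hg : g ∈ A.autGroup)
    (w : ℕ → X) (n : ℕ) : pre (extOmega (⇑g) w) n = g (pre w n) := by
  induction n with
  | zero =>
    have := G_length A hInv g hg []
    exact (List.length_eq_zero_iff.1 this).symm
  | succ n ih =>
    rw [pre_succ, ih]
    have e : extOmega (⇑g) w n = (g (pre w (n + 1))).getD n (w n) := rfl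
    obtain ⟨k, hk⟩ := G_sec A hInv g hg (pre w n)
    have hl := G_length A hInv g hg (pre w (n + 1))
    have hl' := G_length A hInv g hg (pre w n)
    rw [e]
    rw [pre_length] at hl hl'
    rw [pre_succ, hk] at hl ⊢
    rw [List.length_append, hl'] at hl
    obtain ⟨y, hy⟩ := List.length_eq_one_iff.1 (by omega : (k [w n]).length = 1)
    rw [hy]
    simp [List.getD_append_right, hl']

/-- growth condition -/
def Dn (A : Mealy S X) (w : ℕ → X) (n : ℕ) : Prop :=
  ∃ g ∈ A.autGroup, g (pre w n) = pre w n ∧ g (pre w (n + 1)) ≠ pre w (n + 1)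

theorem orbit_finite_iff [Finite X] (A : Mealy S X) (hInv : A.Invertible) (w : ℕ → X) :
    (A.orbitOmega w).Finite ↔ {n | Dn A w n}.Finite := by
  constructor
  · intro hf
    by_contra hinf
    choose! g hg h1 h2 using (fun n (h : n ∈ {n | Dn A w n}) => h)
    refine hinf (Set.Finite.of_injOn (f := fun n => extOmega (⇑(g n)) w) (t := A.orbitOmega w)
      (fun n hn => ⟨g n, hg n hn, rfl⟩) ?_ hf)
    have key : ∀ n ∈ {n | Dn A w n}, ∀ m ∈ {n | Dn A w n}, n < m →
        extOmega (⇑(g n)) w ≠ extOmega (⇑(g m)) w := by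
      intro n hn m hm hnm he
      apply h2 n hn
      rw [← pre_extOmega A hInv _ (hg n hn), he, pre_extOmega A hInv _ (hg m hm)]
      obtain ⟨d, rfl⟩ := Nat.exists_eq_add_of_le (Nat.succ_le_of_lt hnm)
      have hpre : ∃ z, pre w (n.succ + d) = pre w (n + 1) ++ z := by
        refine ⟨(pre w (n.succ + d)).drop (n + 1), ?_⟩
        have : (pre w (n.succ + d)).take (n + 1) = pre w (n + 1) := by
          simp [pre, ← List.map_take, List.take_range]
        conv_lhs => rw [← List.take_append_drop (n + 1) (pre w (n.succ + d)), this]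
      obtain ⟨z, hz⟩ := hpre
      obtain ⟨k, hk⟩ := G_sec A hInv _ (hg _ hm) (pre w (n + 1))
      have := h1 _ hm
      rw [hz, hk] at this
      exact (List.append_inj this (G_length A hInv _ (hg _ hm) _)).1
    intro n hn m hm he
    rcases lt_trichotomy n m with h | h | h
    · exact absurd he (key n hn m hm h)
    · exact h
    · exact absurd he.symm (key m hm n hn h)
  · intro hf
    obtain ⟨N, hN⟩ := hf.bddAbove
    have hD : ∀ n, N < n → ¬ Dn A w n := fun n hn hd => by
      have := hN hd
      omega
    refine Set.Finite.of_injOn (f := fun w' => pre w' (N + 1))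
      (t := {u : List X | u.length = N + 1}) (fun w' _ => pre_length w' _) ?_
      (List.finite_length_eq X (N + 1))
    rintro _ ⟨a, ha, rfl⟩ _ ⟨b, hb, rfl⟩ he
    simp only [pre_extOmega A hInv _ ha, pre_extOmega A hInv _ hb] at he
    have key : ∀ d, (b⁻¹ * a) (pre w (N + 1 + d)) = pre w (N + 1 + d) := by
      intro d
      induction d with
      | zero => simp [he]
      | succ d ih =>
        by_contra hne
        exact hD (N + 1 + d) (by omega) ⟨b⁻¹ * a, mul_mem (inv_mem hb) ha, ih, hne⟩
    have key2 : ∀ n, a (pre w n) = b (pre w n) := by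
      intro n
      have hz : ∃ z, pre w (N + 1 + n) = pre w n ++ z := by
        refine ⟨(pre w (N + 1 + n)).drop n, ?_⟩
        have : (pre w (N + 1 + n)).take n = pre w n := by
          simp [pre, ← List.map_take, List.take_range]
        conv_lhs => rw [← List.take_append_drop n (pre w (N + 1 + n)), this]
      obtain ⟨z, hz⟩ := hz
      have hab : b⁻¹ * a ∈ A.autGroup := mul_mem (inv_mem hb) ha
      obtain ⟨k, hk⟩ := G_sec A hInv _ hab (pre w n)
      have h3 := key n
      rw [hz, hk] at h3
      have h4 := (List.append_inj h3 (G_length A hInv _ hab _)).1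
      rwa [Equiv.Perm.mul_apply, Equiv.Perm.inv_eq_iff_eq] at h4
    apply pre_ext
    intro n
    rw [pre_extOmega A hInv _ ha, pre_extOmega A hInv _ hb, key2]

theorem dfaRun_conj {Q Q' : Type*} (e : Q ≃ Q') (δ : Q → X → Q) (q₀ : Q) (w : ℕ → X) (n : ℕ) :
    dfaRun (fun q x => e (δ (e.symm q) x)) (e q₀) w n = e (dfaRun δ q₀ w n) := by
  induction n with
  | zero => rfl
  | succ n ih => simp [dfaRun, ih]

theorem main [Finite S] [Finite X] [Nonempty X] (A : Mealy S X) (hInv : A.Invertible)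
    (hB : A.Bounded) :
    ∃ (Q : Type) (_ : Fintype Q) (δ : Q → X → Q) (q₀ : Q) (F : Set Q),
      ∀ w : ℕ → X,
        (A.orbitOmega w).Finite ↔ { n : ℕ | dfaRun δ q₀ w n ∈ F }.Finite := by
  have hfin := H_finite A hInv hB
  haveI : Finite (Set.range (H A)) := hfin
  have hwd : ∀ v v' x, H A v = H A v' → H A (v ++ [x]) = H A (v' ++ [x]) := by
    intro v v' x h
    ext k
    rw [H_step A hInv, H_step A hInv, h]
  let rep : Set.range (H A) → List X := fun q => q.2.choose
  have hrep : ∀ q, H A (rep q) = q.1 := fun q => q.2.choose_spec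
  let δ : Set.range (H A) × Prop → X → Set.range (H A) × Prop := fun q x =>
    (⟨H A (rep q.1 ++ [x]), _, rfl⟩, ∃ h ∈ q.1.1, h [x] ≠ [x])
  let q₀ : Set.range (H A) × Prop := (⟨H A [], _, rfl⟩, False)
  obtain ⟨m, ⟨e⟩⟩ := Finite.exists_equiv_fin (Set.range (H A) × Prop)
  refine ⟨Fin m, inferInstance, fun q x => e (δ (e.symm q) x), e q₀,
    {q | (e.symm q).2}, fun w => ?_⟩
  rw [orbit_finite_iff A hInv]
  have h1 : ∀ n, (dfaRun δ q₀ w n).1.1 = H A (pre w n) := by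
    intro n
    induction n with
    | zero => rfl
    | succ n ih =>
      rw [pre_succ]
      exact hwd _ _ _ ((hrep _).trans ih)
  have h2 : ∀ n, (dfaRun δ q₀ w (n + 1)).2 ↔ Dn A w n := by
    intro n
    have e1 : (dfaRun δ q₀ w (n + 1)).2 ↔ ∃ h ∈ (dfaRun δ q₀ w n).1.1, h [w n] ≠ [w n] := Iff.rfl
    rw [e1, h1, H_moves A hInv]
    unfold Dn
    rw [pre_succ]
  have h3 : {n | dfaRun (fun q x => e (δ (e.symm q) x)) (e q₀) w n ∈ {q | (e.symm q).2}}
      = Set.image Nat.succ {n | Dn A w n} := by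
    ext n
    simp only [Set.mem_setOf_eq, dfaRun_conj, Equiv.symm_apply_apply, Set.mem_image]
    cases n with
    | zero => simp [dfaRun, q₀]
    | succ n => rw [h2]; simp
  rw [h3, Set.finite_image_iff Nat.succ_injective.injOn]

end OrbAcc

/-- For a bounded invertible Mealy automaton `A` there is a deterministic
finite-state acceptor such that a right-infinite sequence `w` has a finite `G_A`-orbit
iff the run of the acceptor on `w` visits accepting states only finitely often. -/
theorem orbit_acceptor {S X : Type*} [Fintype S] [Fintype X]
    (hX : 2 ≤ Fintype.card X) (A : Mealy S X)
    (hInv : A.Invertible) (hBdd : A.Bounded) :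
    ∃ (Q : Type) (_ : Fintype Q) (δ : Q → X → Q) (q₀ : Q) (F : Set Q),
      ∀ w : ℕ → X,
        (A.orbitOmega w).Finite ↔ { n : ℕ | dfaRun δ q₀ w n ∈ F }.Finite := by
  haveI : Nonempty X := Fintype.card_pos_iff.1 (by omega)
  exact OrbAcc.main A hInv hBdd
end
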